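/- arXiv:2306.00654 — 2 statements merged into one kernel-verified Lean document; each statement's English description precedes it below -/
import Mathlib

section
/- Let d ≥ 4, let k be an integer with 1 < k ≤ d/2, and a, b ∈ ℝ. Then ρ^{(d)}_{a,b} ∈ Sch_k if and only if −1/(d−1) ≤ (d+1)a + b ≤ (kd−1)/(d−1), a + (d+1)b ≤ 1, and −((d−k+1)/(kd+k−1)) a + b ≥ −1/(d−1). -/
set_option linter.unusedSectionVars false

open Matrix
open scoped ComplexOrder

noncomputable section

/-- The ampliation `id_{M_k} ⊗ L` of a map `L` applied to a bipartite matrix, blockwise. -/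
def idTensor {k m n : ℕ} (L : Matrix (Fin m) (Fin m) ℂ →ₗ[ℂ] Matrix (Fin n) (Fin n) ℂ)
    (X : Matrix (Fin k × Fin m) (Fin k × Fin m) ℂ) : Matrix (Fin k × Fin n) (Fin k × Fin n) ℂ :=
  Matrix.of fun p q => L (Matrix.of fun a b => X (p.1, a) (q.1, b)) p.2 q.2

/-- `L` is `k`-positive if `id_{M_k} ⊗ L` sends positive semidefinite matrices to positive
semidefinite matrices. -/
def IsKPositive {m n : ℕ} (k : ℕ)
    (L : Matrix (Fin m) (Fin m) ℂ →ₗ[ℂ] Matrix (Fin n) (Fin n) ℂ) : Prop :=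
  ∀ X : Matrix (Fin k × Fin m) (Fin k × Fin m) ℂ, X.PosSemidef → (idTensor L X).PosSemidef

/-- The linear map `L^{(d)}_{p,q}(Z) = (1-p-q) (Tr Z / d) I_d + p Z + q Zᵀ`. -/
def Lmap (d : ℕ) (p q : ℝ) :
    Matrix (Fin d) (Fin d) ℂ →ₗ[ℂ] Matrix (Fin d) (Fin d) ℂ :=
  ((((1 - p - q : ℝ) : ℂ) / (d : ℂ)) •
      (Matrix.traceLinearMap (Fin d) ℂ ℂ).smulRight (1 : Matrix (Fin d) (Fin d) ℂ))
    + ((p : ℝ) : ℂ) • LinearMap.id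
    + ((q : ℝ) : ℂ) • (Matrix.transposeLinearEquiv (Fin d) (Fin d) ℂ ℂ).toLinearMap

/-- The maximally entangled vector `|Ω_d⟩ = (1/√d) ∑_j |jj⟩`. -/
def omegaVec (d : ℕ) : Fin d × Fin d → ℂ :=
  fun p => if p.1 = p.2 then ((1 / Real.sqrt d : ℝ) : ℂ) else 0

/-- The flip operator `F_d = ∑_{i,j} |ij⟩⟨ji|`. -/
def flipMatrix (d : ℕ) : Matrix (Fin d × Fin d) (Fin d × Fin d) ℂ :=
  Matrix.of fun p q => if p.1 = q.2 ∧ p.2 = q.1 then 1 else 0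

/-- The orthogonally invariant operators
`ρ^{(d)}_{a,b} = ((1-a-b)/d²) I + a |Ω_d⟩⟨Ω_d| + (b/d) F_d`. -/
def rho (d : ℕ) (a b : ℝ) : Matrix (Fin d × Fin d) (Fin d × Fin d) ℂ :=
  ((((1 - a - b : ℝ) : ℂ) / ((d : ℂ) ^ 2)) • (1 : Matrix (Fin d × Fin d) (Fin d × Fin d) ℂ))
    + (((a : ℝ) : ℂ) • Matrix.vecMulVec (omegaVec d) (star (omegaVec d)))
    + ((((b : ℝ) : ℂ) / (d : ℂ)) • flipMatrix d)

/-- `Sch_k`: finite sums of rank-one operators `|ξ⟩⟨ξ|` with Schmidt rank `SR(ξ) ≤ k`,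
where `SR(ξ)` is the rank of the `d_A × d_B` coefficient matrix of `ξ ∈ ℂ^{d_A} ⊗ ℂ^{d_B}`. -/
def SchmidtSet (dA dB k : ℕ) : Set (Matrix (Fin dA × Fin dB) (Fin dA × Fin dB) ℂ) :=
  {X | ∃ (N : ℕ) (ξ : Fin N → (Fin dA × Fin dB → ℂ)),
    (∀ i, (Matrix.of fun a b => ξ i (a, b)).rank ≤ k) ∧
    X = ∑ i, Matrix.vecMulVec (ξ i) (star (ξ i))}


def tF (d : ℕ) : Matrix (Fin d × Fin d) (Fin d × Fin d) ℂ →ₗ[ℂ] ℂ where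
  toFun M := ∑ i, ∑ j, M (i, j) (j, i)
  map_add' M N := by simp [Finset.sum_add_distrib]
  map_smul' c M := by simp [Finset.mul_sum]

def tO (d : ℕ) : Matrix (Fin d × Fin d) (Fin d × Fin d) ℂ →ₗ[ℂ] ℂ where
  toFun M := ∑ i, ∑ j, M (i, i) (j, j)
  map_add' M N := by simp [Finset.sum_add_distrib]
  map_smul' c M := by simp [Finset.mul_sum]

def tD (d : ℕ) : Matrix (Fin d × Fin d) (Fin d × Fin d) ℂ →ₗ[ℂ] ℂ where
  toFun M := ∑ i, M (i, i) (i, i)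
  map_add' M N := by simp [Finset.sum_add_distrib]
  map_smul' c M := by simp [Finset.mul_sum]

def tT (d : ℕ) : Matrix (Fin d × Fin d) (Fin d × Fin d) ℂ →ₗ[ℂ] ℂ where
  toFun M := ∑ i, ∑ j, M (i, j) (i, j)
  map_add' M N := by simp [Finset.sum_add_distrib]
  map_smul' c M := by simp [Finset.mul_sum]

/-- entries of rho -/
lemma rho_apply (d : ℕ) (hd : 0 < d) (a b : ℝ) (i j k l : Fin d) :
    rho d a b (i, j) (k, l) = ((1 - a - b : ℝ) : ℂ) / (d : ℂ) ^ 2 * (if i = k ∧ j = l then 1 else 0)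
      + (a / d : ℂ) * (if i = j ∧ k = l then 1 else 0)
      + (b / d : ℂ) * (if i = l ∧ j = k then 1 else 0) := by
  have hs : ((Real.sqrt d : ℝ) : ℂ) * ((Real.sqrt d : ℝ) : ℂ) = d := by
    rw [← Complex.ofReal_mul, Real.mul_self_sqrt (by positivity)]; simp
  have hs' : ((Real.sqrt d : ℝ) : ℂ)⁻¹ * ((Real.sqrt d : ℝ) : ℂ)⁻¹ = (d : ℂ)⁻¹ := by
    rw [← mul_inv, hs]
  simp only [rho, Matrix.add_apply, Matrix.smul_apply, Matrix.one_apply, flipMatrix, Matrix.of_apply,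
    vecMulVec_apply, omegaVec, smul_eq_mul, Prod.mk.injEq, Pi.star_apply]
  congr 2
  by_cases h1 : i = j <;> by_cases h2 : k = l <;> simp [h1, h2, hs', div_eq_mul_inv]

lemma tT_rho (d : ℕ) (hd : 0 < d) (a b : ℝ) : tT d (rho d a b) = 1 := by
  have : (d : ℂ) ≠ 0 := by exact_mod_cast hd.ne'
  simp only [tT, LinearMap.coe_mk, AddHom.coe_mk, rho_apply d hd]
  simp [Finset.sum_add_distrib, ← Finset.mul_sum, eq_comm, Finset.sum_ite_eq]
  field_simp
  ring

lemma tF_rho (d : ℕ) (hd : 0 < d) (a b : ℝ) :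
    tF d (rho d a b) = (((1 + (d - 1) * (a + (d + 1) * b)) / d : ℝ) : ℂ) := by
  have : (d : ℂ) ≠ 0 := by exact_mod_cast hd.ne'
  simp only [tF, LinearMap.coe_mk, AddHom.coe_mk, rho_apply d hd]
  simp [Finset.sum_add_distrib, ← Finset.mul_sum, eq_comm, Finset.sum_ite_eq]
  field_simp
  ring

lemma tO_rho (d : ℕ) (hd : 0 < d) (a b : ℝ) :
    tO d (rho d a b) = (((1 + (d - 1) * ((d + 1) * a + b)) / d : ℝ) : ℂ) := by
  have : (d : ℂ) ≠ 0 := by exact_mod_cast hd.ne'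
  simp only [tO, LinearMap.coe_mk, AddHom.coe_mk, rho_apply d hd]
  simp [Finset.sum_add_distrib, ← Finset.mul_sum, eq_comm, Finset.sum_ite_eq]
  field_simp
  ring

/-! ### trace-rank inequality -/

lemma trace_sq_le_rank {d : ℕ} (M : Matrix (Fin d) (Fin d) ℂ) :
    ‖∑ i, M i i‖ ^ 2 ≤ M.rank * ∑ i, ∑ j, ‖M i j‖ ^ 2 := by
  classical
  set W := LinearMap.range (Matrix.toLpLin 2 2 M) with hW
  have hr : M.rank = Module.finrank ℂ W := by
    rw [hW, Matrix.toLpLin_eq_toLin]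
    exact Matrix.rank_eq_finrank_range_toLin M _ _
  let u := stdOrthonormalBasis ℂ W
  let col : Fin d → W := fun j => ⟨Matrix.toLpLin 2 2 M (EuclideanSpace.single j 1), by
    exact LinearMap.mem_range_self _ _⟩
  have hcol : ∀ i j, (col j : EuclideanSpace ℂ (Fin d)) i = M i j := by
    intro i j; simp [col, Matrix.toLpLin_apply]
  have hexp : ∀ i j, M i j = ∑ l, inner ℂ (u l) (col j) * ((u l : W) : EuclideanSpace ℂ (Fin d)) i := by
    intro i j
    rw [← hcol]
    conv_lhs => rw [← u.sum_repr' (col j)]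
    simp
  have hn : ∀ j, ∑ l, ‖(inner ℂ (u l) (col j) : ℂ)‖ ^ 2 = ∑ i, ‖M i j‖ ^ 2 := by
    intro j
    rw [u.sum_sq_norm_inner_right, Submodule.coe_norm, EuclideanSpace.norm_sq_eq]
    simp [hcol]
  have hu : ∀ l, ∑ i, ‖((u l : W) : EuclideanSpace ℂ (Fin d)) i‖ ^ 2 = 1 := by
    intro l
    rw [← EuclideanSpace.norm_sq_eq, ← Submodule.coe_norm, u.norm_eq_one]; simp
  have h1 : ‖∑ i, M i i‖ ≤ ∑ p : Fin d × Fin (Module.finrank ℂ W),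
      ‖(inner ℂ (u p.2) (col p.1) : ℂ)‖ * ‖((u p.2 : W) : EuclideanSpace ℂ (Fin d)) p.1‖ := by
    rw [Fintype.sum_prod_type]
    refine (norm_sum_le _ _).trans (Finset.sum_le_sum fun i _ => ?_)
    rw [hexp i i]
    refine (norm_sum_le _ _).trans (Finset.sum_le_sum fun l _ => ?_)
    rw [norm_mul]
  have h2 := Finset.sum_mul_sq_le_sq_mul_sq (Finset.univ : Finset (Fin d × Fin (Module.finrank ℂ W)))
    (fun p => ‖(inner ℂ (u p.2) (col p.1) : ℂ)‖) (fun p => ‖((u p.2 : W) : EuclideanSpace ℂ (Fin d)) p.1‖)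
  have h3 : ∑ p : Fin d × Fin (Module.finrank ℂ W), ‖(inner ℂ (u p.2) (col p.1) : ℂ)‖ ^ 2
      = ∑ i, ∑ j, ‖M i j‖ ^ 2 := by
    rw [Fintype.sum_prod_type, Finset.sum_comm (s := (Finset.univ : Finset (Fin d))) (f := fun i j => ‖M i j‖ ^ 2)]
    exact Finset.sum_congr rfl fun j _ => hn j
  have h4 : ∑ p : Fin d × Fin (Module.finrank ℂ W), ‖((u p.2 : W) : EuclideanSpace ℂ (Fin d)) p.1‖ ^ 2
      = M.rank := by
    rw [Fintype.sum_prod_type_right]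
    simp [hu, hr]
  rw [h3, h4] at h2
  calc _ ≤ _ := pow_le_pow_left₀ (norm_nonneg _) h1 2
    _ ≤ _ := h2
    _ = _ := mul_comm _ _

/-! ### Invariants of pure states -/
lemma tT_pure {d : ℕ} (ξ : Fin d × Fin d → ℂ) :
    tT d (vecMulVec ξ (star ξ)) = ((∑ i, ∑ j, ‖ξ (i, j)‖ ^ 2 : ℝ) : ℂ) := by
  simp [tT, vecMulVec_apply, Complex.mul_conj, Complex.normSq_eq_norm_sq]

lemma tO_pure {d : ℕ} (ξ : Fin d × Fin d → ℂ) :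
    tO d (vecMulVec ξ (star ξ)) = ((‖∑ i, ξ (i, i)‖ ^ 2 : ℝ) : ℂ) := by
  rw [← Complex.normSq_eq_norm_sq, ← Complex.mul_conj]
  simp [tO, vecMulVec_apply, Finset.sum_mul_sum]

lemma tD_pure {d : ℕ} (ξ : Fin d × Fin d → ℂ) :
    tD d (vecMulVec ξ (star ξ)) = ((∑ i, ‖ξ (i, i)‖ ^ 2 : ℝ) : ℂ) := by
  simp [tD, vecMulVec_apply, Complex.mul_conj, Complex.normSq_eq_norm_sq]

lemma tF_pure_plus {d : ℕ} (ξ : Fin d × Fin d → ℂ) (s : ℝ) (hs : s ^ 2 = 1) :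
    (∑ i, ∑ j, ‖ξ (i, j) + s * ξ (j, i)‖ ^ 2 : ℝ)
      = 2 * (tT d (vecMulVec ξ (star ξ))).re + 2 * s * (tF d (vecMulVec ξ (star ξ))).re := by
  have h : ∀ i j, ‖ξ (i, j) + s * ξ (j, i)‖ ^ 2 = (ξ (i, j) * star (ξ (i, j))).re
      + (ξ (j, i) * star (ξ (j, i))).re + s * (ξ (i, j) * star (ξ (j, i))).re
      + s * (ξ (j, i) * star (ξ (i, j))).re := by
    intro i j
    rw [← Complex.normSq_eq_norm_sq, Complex.normSq_apply]
    simp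
    linear_combination ((ξ (j, i)).re ^ 2 + (ξ (j, i)).im ^ 2) * hs
  simp only [h, Finset.sum_add_distrib, ← Finset.mul_sum]
  have e1 : ∑ i, ∑ j, (ξ (j, i) * star (ξ (j, i))).re = ∑ i, ∑ j, (ξ (i, j) * star (ξ (i, j))).re :=
    Finset.sum_comm
  have e2 : ∑ i, ∑ j, (ξ (j, i) * star (ξ (i, j))).re = ∑ i, ∑ j, (ξ (i, j) * star (ξ (j, i))).re :=
    Finset.sum_comm
  rw [e1, e2]
  simp only [tT, tF, LinearMap.coe_mk, AddHom.coe_mk, vecMulVec_apply, Pi.star_apply, Complex.re_sum]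
  ring

lemma rank_add_le' {d : ℕ} (A B : Matrix (Fin d) (Fin d) ℂ) : (A + B).rank ≤ A.rank + B.rank := by
  unfold Matrix.rank
  rw [Matrix.mulVecLin_add]
  calc _ ≤ Module.finrank ℂ ↥(LinearMap.range A.mulVecLin ⊔ LinearMap.range B.mulVecLin) :=
        Submodule.finrank_mono (by
          rintro _ ⟨x, rfl⟩
          exact Submodule.add_mem_sup (LinearMap.mem_range_self _ x) (LinearMap.mem_range_self _ x))
    _ ≤ _ := Submodule.finrank_add_le_finrank_add_finrank _ _

lemma pure_ineq {d k : ℕ} (ξ : Fin d × Fin d → ℂ) (h : (Matrix.of fun a b => ξ (a, b)).rank ≤ k) :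
    let P := vecMulVec ξ (star ξ)
    0 ≤ (tO d P).re ∧ (tO d P).re ≤ k * (tT d P).re ∧ (tF d P).re ≤ (tT d P).re ∧
      (tO d P).re ≤ k * ((tT d P).re + (tF d P).re) := by
  intro P
  have hk : ((Matrix.of fun a b => ξ (a, b)).rank : ℝ) ≤ k := by exact_mod_cast h
  refine ⟨?_, ?_, ?_, ?_⟩
  · rw [tO_pure, Complex.ofReal_re]; positivity
  · rw [tO_pure, tT_pure, Complex.ofReal_re, Complex.ofReal_re]
    refine (trace_sq_le_rank (Matrix.of fun a b => ξ (a, b))).trans ?_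
    exact mul_le_mul_of_nonneg_right hk (by positivity)
  · have := tF_pure_plus ξ (-1) (by norm_num)
    have h0 : 0 ≤ (∑ i, ∑ j, ‖ξ (i, j) + (-1 : ℝ) * ξ (j, i)‖ ^ 2 : ℝ) := by positivity
    change (tF d (vecMulVec ξ (star ξ))).re ≤ (tT d (vecMulVec ξ (star ξ))).re
    linarith
  · have h1 := tF_pure_plus ξ 1 (by norm_num)
    have h2 := trace_sq_le_rank ((Matrix.of fun a b => ξ (a, b)) + (Matrix.of fun a b => ξ (a, b))ᵀ)
    have h3 : (((Matrix.of fun a b => ξ (a, b)) + (Matrix.of fun a b => ξ (a, b))ᵀ).rank : ℝ) ≤ 2 * k := by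
      have := rank_add_le' (Matrix.of fun a b => ξ (a, b)) (Matrix.of fun a b => ξ (a, b))ᵀ
      rw [Matrix.rank_transpose] at this
      exact_mod_cast (by omega)
    have h4 := h2.trans (mul_le_mul_of_nonneg_right h3 (by positivity))
    have h5 : ‖∑ i, ((Matrix.of fun a b => ξ (a, b)) + (Matrix.of fun a b => ξ (a, b))ᵀ) i i‖ ^ 2
       = 4 * (tO d P).re := by
      simp only [P]
      rw [tO_pure, Complex.ofReal_re]
      simp only [Matrix.add_apply, Matrix.transpose_apply, Matrix.of_apply, ← two_mul, ← Finset.mul_sum,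
        norm_mul]
      norm_num
      ring
    rw [h5] at h4
    simp only [Matrix.add_apply, Matrix.transpose_apply, Matrix.of_apply] at h4
    simp only [Complex.ofReal_one, one_mul] at h1
    rw [h1] at h4
    change 4 * _ ≤ 2 * (k : ℝ) * (2 * (tT d P).re + 2 * 1 * (tF d P).re) at h4
    linarith

lemma sch_ineq {d k : ℕ} (P : Matrix (Fin d × Fin d) (Fin d × Fin d) ℂ) (h : P ∈ SchmidtSet d d k) :
    0 ≤ (tO d P).re ∧ (tO d P).re ≤ k * (tT d P).re ∧ (tF d P).re ≤ (tT d P).re ∧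
      (tO d P).re ≤ k * ((tT d P).re + (tF d P).re) := by
  obtain ⟨N, ξ, hr, rfl⟩ := h
  simp only [map_sum, Complex.re_sum, ← Finset.sum_add_distrib, Finset.mul_sum]
  refine ⟨Finset.sum_nonneg fun i _ => ?_, Finset.sum_le_sum fun i _ => ?_,
    Finset.sum_le_sum fun i _ => ?_, Finset.sum_le_sum fun i _ => ?_⟩
  · exact (pure_ineq (ξ i) (hr i)).1
  · exact (pure_ineq (ξ i) (hr i)).2.1
  · exact (pure_ineq (ξ i) (hr i)).2.2.1
  · exact (pure_ineq (ξ i) (hr i)).2.2.2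

/-- translation of the inequalities -/
lemma cond_iff {d k : ℕ} (hd : 4 ≤ d) (hk : 1 < k) (a b s t : ℝ)
    (hs : s = (1 + (d - 1) * ((d + 1) * a + b)) / d) (ht : t = (1 + (d - 1) * (a + (d + 1) * b)) / d) :
    (0 ≤ s ∧ s ≤ k ∧ t ≤ 1 ∧ s ≤ k * (1 + t)) ↔
      (-(1 / ((d : ℝ) - 1)) ≤ ((d : ℝ) + 1) * a + b ∧
       ((d : ℝ) + 1) * a + b ≤ ((k : ℝ) * d - 1) / ((d : ℝ) - 1) ∧
       a + ((d : ℝ) + 1) * b ≤ 1 ∧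
       -(1 / ((d : ℝ) - 1)) ≤ -(((d : ℝ) - k + 1) / ((k : ℝ) * d + k - 1)) * a + b) := by
  have hd' : (4 : ℝ) ≤ d := by exact_mod_cast hd
  have hk' : (1 : ℝ) < k := by exact_mod_cast hk
  have hd1 : (0 : ℝ) < d - 1 := by linarith
  have hkd : (0 : ℝ) < k * d + k - 1 := by nlinarith
  have hd0 : (0 : ℝ) < d := by linarith
  have e1 : ((d : ℝ) + 1) * a + b - (-(1 / ((d : ℝ) - 1))) = s * (d / (d - 1)) := by
    rw [hs]; field_simp; ring
  have e2 : ((k : ℝ) * d - 1) / ((d : ℝ) - 1) - (((d : ℝ) + 1) * a + b) = (k - s) * (d / (d - 1)) := by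
    rw [hs]; field_simp; ring
  have e3 : 1 - (a + ((d : ℝ) + 1) * b) = (1 - t) * (d / (d - 1)) := by
    rw [ht]; field_simp; ring
  have e4 : -(((d : ℝ) - k + 1) / ((k : ℝ) * d + k - 1)) * a + b - (-(1 / ((d : ℝ) - 1)))
      = (k * (1 + t) - s) * (d / ((d - 1) * (k * d + k - 1))) := by
    have hne := hkd.ne'
    rw [hs, ht]
    generalize hc : (k : ℝ) * d + k - 1 = c at *
    field_simp
    rw [← hc]; ring
  have p1 : (0 : ℝ) < d / (d - 1) := by positivity
  have p2 : (0 : ℝ) < d / ((d - 1) * (k * d + k - 1)) := by positivity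
  rw [← sub_nonneg (a := ((d : ℝ) + 1) * a + b), e1,
    ← sub_nonneg (b := ((d : ℝ) + 1) * a + b) , e2, ← sub_nonneg (b := a + ((d : ℝ) + 1) * b), e3,
    ← sub_nonneg (a := -(((d : ℝ) - k + 1) / ((k : ℝ) * d + k - 1)) * a + b), e4,
    mul_nonneg_iff_of_pos_right p1, mul_nonneg_iff_of_pos_right p1, mul_nonneg_iff_of_pos_right p1,
    mul_nonneg_iff_of_pos_right p2, sub_nonneg, sub_nonneg, sub_nonneg]

/-! ### The cone `Sch_k` -/
lemma sch_of_fintype {d k : ℕ} {ι : Type} [Fintype ι] (ξ : ι → Fin d × Fin d → ℂ)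
    (h : ∀ i, (Matrix.of fun a b => ξ i (a, b)).rank ≤ k) :
    ∑ i, vecMulVec (ξ i) (star (ξ i)) ∈ SchmidtSet d d k := by
  refine ⟨Fintype.card ι, fun n => ξ ((Fintype.equivFin ι).symm n), fun n => h _, ?_⟩
  exact (Equiv.sum_comp (Fintype.equivFin ι).symm (fun i => vecMulVec (ξ i) (star (ξ i)))).symm

lemma sch_add {d k : ℕ} {M N : Matrix (Fin d × Fin d) (Fin d × Fin d) ℂ}
    (hM : M ∈ SchmidtSet d d k) (hN : N ∈ SchmidtSet d d k) : M + N ∈ SchmidtSet d d k := by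
  obtain ⟨m, ξ, h1, rfl⟩ := hM
  obtain ⟨n, η, h2, rfl⟩ := hN
  have := sch_of_fintype (d := d) (k := k) (ι := Fin m ⊕ Fin n) (Sum.elim ξ η) (by
    rintro (i | i)
    · exact h1 i
    · exact h2 i)
  simpa using this

lemma sch_zero {d k : ℕ} : (0 : Matrix (Fin d × Fin d) (Fin d × Fin d) ℂ) ∈ SchmidtSet d d k :=
  ⟨0, fun i => i.elim0, fun i => i.elim0, by simp⟩

lemma sch_sum {d k : ℕ} {ι : Type} (s : Finset ι) (M : ι → Matrix (Fin d × Fin d) (Fin d × Fin d) ℂ)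
    (h : ∀ i ∈ s, M i ∈ SchmidtSet d d k) : ∑ i ∈ s, M i ∈ SchmidtSet d d k :=
  Finset.sum_induction _ _ (fun _ _ => sch_add) sch_zero h

lemma sch_smul {d k : ℕ} {M : Matrix (Fin d × Fin d) (Fin d × Fin d) ℂ} (c : ℝ) (hc : 0 ≤ c)
    (hM : M ∈ SchmidtSet d d k) : (c : ℂ) • M ∈ SchmidtSet d d k := by
  obtain ⟨m, ξ, h1, rfl⟩ := hM
  have hs : ((Real.sqrt c : ℝ) : ℂ) * ((Real.sqrt c : ℝ) : ℂ) = c := by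
    rw [← Complex.ofReal_mul, Real.mul_self_sqrt hc]
  refine ⟨m, fun i => ((Real.sqrt c : ℝ) : ℂ) • ξ i, fun i => ?_, ?_⟩
  · have : (Matrix.of fun a b => (((Real.sqrt c : ℝ) : ℂ) • ξ i) (a, b))
      = (((Real.sqrt c : ℝ) : ℂ) • (1 : Matrix (Fin d) (Fin d) ℂ)) * (Matrix.of fun a b => ξ i (a, b)) := by
      ext a b; simp
    rw [this]
    exact (Matrix.rank_mul_le_right _ _).trans (h1 i)
  · rw [Finset.smul_sum]
    refine Finset.sum_congr rfl fun i _ => ?_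
    ext p q
    simp only [Matrix.smul_apply, vecMulVec_apply, Pi.smul_apply, Pi.star_apply, smul_eq_mul, star_mul',
      ← hs]
    simp
    ring

lemma sch_local {d k : ℕ} {M : Matrix (Fin d × Fin d) (Fin d × Fin d) ℂ} (σ : Equiv.Perm (Fin d))
    (s : Fin d → ℝ) (hM : M ∈ SchmidtSet d d k) :
    (Matrix.of fun p q : Fin d × Fin d => ((s p.1 * s p.2 * s q.1 * s q.2 : ℝ) : ℂ) *
      M (σ p.1, σ p.2) (σ q.1, σ q.2)) ∈ SchmidtSet d d k := by
  obtain ⟨m, ξ, h1, rfl⟩ := hM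
  refine ⟨m, fun i p => (s p.1 : ℂ) * s p.2 * ξ i (σ p.1, σ p.2), fun i => ?_, ?_⟩
  · have : (Matrix.of fun a b => (s a : ℂ) * s b * ξ i (σ a, σ b))
      = Matrix.diagonal (fun a => (s a : ℂ)) * (Matrix.of fun a b => ξ i (a, b)).submatrix σ σ
        * Matrix.diagonal (fun a => (s a : ℂ)) := by
      ext a b; simp; ring
    simp only
    rw [this]
    refine (Matrix.rank_mul_le_left _ _).trans ((Matrix.rank_mul_le_right _ _).trans ?_)
    rw [Matrix.rank_submatrix]
    exact h1 i
  · ext p q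
    simp only [Matrix.of_apply, Matrix.sum_apply, vecMulVec_apply, Finset.mul_sum, Pi.star_apply]
    refine Finset.sum_congr rfl fun i _ => ?_
    simp
    ring

/-! ### Twirling -/
def matched {d : ℕ} (p q : Fin d × Fin d) : Prop :=
  (p.1 = q.1 ∧ p.2 = q.2) ∨ (p.1 = q.2 ∧ p.2 = q.1) ∨ (p.1 = p.2 ∧ q.1 = q.2)

instance {d : ℕ} (p q : Fin d × Fin d) : Decidable (matched p q) := by
  unfold matched; infer_instance

lemma rho_sign_sum {d : ℕ} (p q : Fin d × Fin d) :
    ∑ ε : Fin d → ℤˣ, ε p.1 * ε p.2 * ε q.1 * (ε q.2 : ℤ)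
      = if matched p q then (Fintype.card (Fin d → ℤˣ) : ℤ) else 0 := by
  split_ifs with h
  · have : ∀ ε : Fin d → ℤˣ, (ε p.1 * ε p.2 * ε q.1 * ε q.2 : ℤ) = 1 := by
      intro ε
      have e1 : ∀ i, (ε i : ℤ) * ε i = 1 := fun i => by
        rw [← Units.val_mul, Int.units_mul_self]; rfl
      rcases h with ⟨h1, h2⟩ | ⟨h1, h2⟩ | ⟨h1, h2⟩ <;> rw [h1, h2]
      · linear_combination (ε q.2 * ε q.2 : ℤ) * e1 q.1 + e1 q.2
      · linear_combination (ε q.2 * ε q.2 : ℤ) * e1 q.1 + e1 q.2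
      · linear_combination (ε q.2 * ε q.2 : ℤ) * e1 p.2 + e1 q.2
    simp [this]
  · have hm : ∃ m, ((if p.1 = m then -1 else 1) * (if p.2 = m then -1 else 1) * (if q.1 = m then -1 else 1)
        * (if q.2 = m then -1 else 1) : ℤ) = -1 := by
      obtain ⟨i, j⟩ := p
      obtain ⟨k, l⟩ := q
      simp only [matched] at h ⊢
      by_contra! hc
      have c1 := hc i
      have c2 := hc j
      have c3 := hc k
      have c4 := hc l
      grind
    obtain ⟨m, hm⟩ := hm
    let g : Fin d → ℤˣ := fun x => if x = m then -1 else 1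
    have hg : ∀ x, ((g x : ℤˣ) : ℤ) = if x = m then -1 else 1 := by
      intro x; simp only [g]; split_ifs <;> simp
    have h1 := Equiv.sum_comp (Equiv.mulLeft g)
      (fun ε : Fin d → ℤˣ => (ε p.1 * ε p.2 * ε q.1 * (ε q.2 : ℤ)))
    have h2 : ∑ ε : Fin d → ℤˣ, ((Equiv.mulLeft g ε) p.1 * (Equiv.mulLeft g ε) p.2 * (Equiv.mulLeft g ε) q.1
        * ((Equiv.mulLeft g ε) q.2 : ℤ)) = - ∑ ε : Fin d → ℤˣ, (ε p.1 * ε p.2 * ε q.1 * (ε q.2 : ℤ)) := by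
      rw [← Finset.sum_neg_distrib]
      refine Finset.sum_congr rfl fun ε _ => ?_
      simp only [Equiv.coe_mulLeft, Pi.mul_apply, Units.val_mul, hg]
      linear_combination (ε p.1 * ε p.2 * ε q.1 * (ε q.2 : ℤ)) * hm
    rw [h2] at h1
    linarith

lemma sch_matched {d k : ℕ} {M : Matrix (Fin d × Fin d) (Fin d × Fin d) ℂ} (hM : M ∈ SchmidtSet d d k) :
    (Matrix.of fun p q => if matched p q then M p q else 0) ∈ SchmidtSet d d k := by
  have h1 := sch_sum (Finset.univ : Finset (Fin d → ℤˣ)) _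
    (fun ε _ => sch_local 1 (fun i => ((ε i : ℤ) : ℝ)) hM)
  have h2 := sch_smul (1 / (Fintype.card (Fin d → ℤˣ) : ℝ)) (by positivity) h1
  convert h2 using 1
  ext p q
  have h3 := congrArg (fun z : ℤ => (z : ℂ)) (rho_sign_sum p q)
  simp only [Int.cast_sum] at h3
  simp only [Matrix.of_apply, Matrix.smul_apply, Matrix.sum_apply, ← Finset.sum_mul, Equiv.Perm.coe_one, id]
  have h4 : ∑ ε : Fin d → ℤˣ, (((ε p.1 : ℤ) * (ε p.2 : ℤ) * (ε q.1 : ℤ) * (ε q.2 : ℤ) : ℝ) : ℂ)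
      = ((if matched p q then (Fintype.card (Fin d → ℤˣ) : ℤ) else 0 : ℤ) : ℂ) := by
    rw [← h3]; push_cast; rfl
  rw [h4]
  have : (Fintype.card (Fin d → ℤˣ) : ℂ) ≠ 0 := by
    exact_mod_cast Fintype.card_ne_zero
  split_ifs
  · rw [smul_eq_mul]
    push_cast
    field_simp
  · simp

lemma perm_pair {d : ℕ} {i j i' j' : Fin d} (h : i ≠ j) (h' : i' ≠ j') :
    ∃ σ : Equiv.Perm (Fin d), σ i = i' ∧ σ j = j' := by
  refine ⟨Equiv.swap (Equiv.swap i i' j) j' * Equiv.swap i i', ?_, ?_⟩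
  · rw [Equiv.Perm.mul_apply, Equiv.swap_apply_left, Equiv.swap_apply_of_ne_of_ne _ h']
    intro hc
    have : Equiv.swap i i' i = Equiv.swap i i' j := by rw [Equiv.swap_apply_left]; exact hc
    exact h ((Equiv.swap i i').injective this)
  · rw [Equiv.Perm.mul_apply, Equiv.swap_apply_left]

lemma pair_inv_zero {d : ℕ} (f : Fin d → Fin d → ℂ)
    (hf : ∀ (σ : Equiv.Perm (Fin d)) x y, f (σ x) (σ y) = f x y) (h0 : ∀ x, f x x = 0)
    (hs : ∑ x, ∑ y, f x y = 0) (i j : Fin d) : f i j = 0 := by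
  by_cases hij : i = j
  · rw [hij, h0]
  have h1 : ∀ x y, f x y = if x = y then 0 else f i j := by
    intro x y
    split_ifs with h
    · rw [h, h0]
    · obtain ⟨σ, rfl, rfl⟩ := perm_pair hij h
      exact hf _ _ _
  rw [Finset.sum_congr rfl fun x _ => Finset.sum_congr rfl fun y _ => h1 x y] at hs
  have h2 : ∀ x y : Fin d, (if x = y then 0 else f i j) = f i j - if x = y then f i j else 0 := by
    intro x y; split_ifs <;> simp
  simp_rw [h2] at hs
  simp [Finset.sum_sub_distrib] at hs
  have hd : 2 ≤ d := by
    have : i.val ≠ j.val := fun h => hij (Fin.ext h)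
    omega
  have h3 : (d : ℂ) * (d - 1) * f i j = 0 := by linear_combination hs
  have h4 : (d : ℂ) ≠ 0 := by exact_mod_cast (by omega : d ≠ 0)
  have h5 : (d : ℂ) - 1 ≠ 0 := by
    rw [sub_ne_zero]; exact_mod_cast (by omega : d ≠ 1)
  simpa [h4, h5] using h3

lemma inv_zero_diag {d : ℕ} (f : Fin d → ℂ)
    (hf : ∀ (σ : Equiv.Perm (Fin d)) x, f (σ x) = f x) (hs : ∑ x, f x = 0) (i : Fin d) : f i = 0 := by
  have h1 : ∀ x, f x = f i := fun x => by
    have := hf (Equiv.swap i x) i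
    rwa [Equiv.swap_apply_left] at this
  rw [Finset.sum_congr rfl fun x _ => h1 x] at hs
  have h4 : (d : ℂ) ≠ 0 := by exact_mod_cast (by have := i.pos; omega : d ≠ 0)
  simpa [h4] using hs

lemma eq_zero_of_inv {d : ℕ} (M : Matrix (Fin d × Fin d) (Fin d × Fin d) ℂ)
    (hinv : ∀ (σ : Equiv.Perm (Fin d)) i j k l, M (σ i, σ j) (σ k, σ l) = M (i, j) (k, l))
    (hmat : ∀ p q, ¬ matched p q → M p q = 0)
    (hT : tT d M = 0) (hF : tF d M = 0) (hO : tO d M = 0) (hD : tD d M = 0) : M = 0 := by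
  have hE := inv_zero_diag (fun i => M (i, i) (i, i)) (fun σ x => hinv σ _ _ _ _) hD
  have h1 := pair_inv_zero (fun i j => M (i, j) (i, j)) (fun σ x y => hinv σ _ _ _ _) hE hT
  have h2 := pair_inv_zero (fun i j => M (i, j) (j, i)) (fun σ x y => hinv σ _ _ _ _) hE hF
  have h3 := pair_inv_zero (fun i j => M (i, i) (j, j)) (fun σ x y => hinv σ _ _ _ _) hE hO
  ext ⟨i, j⟩ ⟨k, l⟩
  by_cases h : matched (i, j) (k, l)
  · rcases h with ⟨ha, hb⟩ | ⟨ha, hb⟩ | ⟨ha, hb⟩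
    · simp only at ha hb; subst ha; subst hb; exact h1 _ _
    · simp only at ha hb; subst ha; subst hb; exact h2 _ _
    · simp only at ha hb; subst ha; subst hb; exact h3 _ _
  · exact hmat _ _ h

lemma key {d k : ℕ} (hd : 0 < d) (a b : ℝ) (M : Matrix (Fin d × Fin d) (Fin d × Fin d) ℂ)
    (hM : M ∈ SchmidtSet d d k) (hT : tT d M = tT d (rho d a b)) (hF : tF d M = tF d (rho d a b))
    (hO : tO d M = tO d (rho d a b)) (hD : tD d M = tD d (rho d a b)) :
    rho d a b ∈ SchmidtSet d d k := by
  set M' : Matrix (Fin d × Fin d) (Fin d × Fin d) ℂ := Matrix.of fun p q => if matched p q then M p q else 0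
    with hM'
  have hM'S : M' ∈ SchmidtSet d d k := sch_matched hM
  set n : ℝ := (Fintype.card (Equiv.Perm (Fin d)) : ℝ) with hn
  have hn0 : (n : ℂ) ≠ 0 := by
    rw [hn]; exact_mod_cast Fintype.card_ne_zero
  set R : Matrix (Fin d × Fin d) (Fin d × Fin d) ℂ := Matrix.of fun p q =>
    (1 / n : ℂ) * ∑ σ : Equiv.Perm (Fin d), M' (σ p.1, σ p.2) (σ q.1, σ q.2) with hR
  have hRS : R ∈ SchmidtSet d d k := by
    have h1 := sch_sum (Finset.univ : Finset (Equiv.Perm (Fin d))) _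
      (fun σ _ => sch_local σ (fun i => (1 : ℝ)) hM'S)
    have h2 := sch_smul (1 / n) (by positivity) h1
    convert h2 using 1
    ext p q
    simp [hR, Matrix.sum_apply]
  have hS1 : ∀ f : Fin d → ℂ, (1 / n : ℂ) * ∑ σ : Equiv.Perm (Fin d), ∑ i, f (σ i) = ∑ i, f i := by
    intro f
    have : ∀ σ : Equiv.Perm (Fin d), ∑ i, f (σ i) = ∑ i, f i := fun σ => Equiv.sum_comp σ f
    simp only [this, Finset.sum_const, Finset.card_univ, nsmul_eq_mul]
    have : (Fintype.card (Equiv.Perm (Fin d)) : ℂ) = n := by rw [hn]; simp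
    rw [this]; field_simp
  have hS2 : ∀ f : Fin d → Fin d → ℂ,
      (1 / n : ℂ) * ∑ σ : Equiv.Perm (Fin d), ∑ i, ∑ j, f (σ i) (σ j) = ∑ i, ∑ j, f i j := by
    intro f
    rw [← hS1 (fun i => ∑ j, f i j)]
    congr 1
    refine Finset.sum_congr rfl fun σ _ => Finset.sum_congr rfl fun i _ => ?_
    exact Equiv.sum_comp σ (f (σ i))
  have comm2 : ∀ g : Equiv.Perm (Fin d) → Fin d → Fin d → ℂ,
      ∑ i, ∑ j, (1 / n : ℂ) * ∑ σ, g σ i j = (1 / n : ℂ) * ∑ σ, ∑ i, ∑ j, g σ i j := by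
    intro g
    simp only [← Finset.mul_sum]
    congr 1
    rw [Finset.sum_comm]
    conv_lhs => enter [2, j]; rw [Finset.sum_comm]
    rw [Finset.sum_comm]
    refine Finset.sum_congr rfl fun σ _ => Finset.sum_comm
  have kT : tT d R = tT d M := by
    simp only [tT, LinearMap.coe_mk, AddHom.coe_mk, hR, Matrix.of_apply]
    rw [comm2, hS2 (fun i j => M' (i, j) (i, j))]
    simp [hM', matched]
  have kF : tF d R = tF d M := by
    simp only [tF, LinearMap.coe_mk, AddHom.coe_mk, hR, Matrix.of_apply]
    rw [comm2, hS2 (fun i j => M' (i, j) (j, i))]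
    simp [hM', matched]
  have kO : tO d R = tO d M := by
    simp only [tO, LinearMap.coe_mk, AddHom.coe_mk, hR, Matrix.of_apply]
    rw [comm2, hS2 (fun i j => M' (i, i) (j, j))]
    simp [hM', matched]
  have kD : tD d R = tD d M := by
    simp only [tD, LinearMap.coe_mk, AddHom.coe_mk, hR, Matrix.of_apply]
    rw [← Finset.mul_sum, Finset.sum_comm, hS1 (fun i => M' (i, i) (i, i))]
    simp [hM', matched]
  have hz : R - rho d a b = 0 := by
    apply eq_zero_of_inv
    · intro σ i j k l
      have e1 : R (σ i, σ j) (σ k, σ l) = R (i, j) (k, l) := by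
        simp only [hR, Matrix.of_apply]
        congr 1
        exact Equiv.sum_comp (Equiv.mulRight σ) (fun τ : Equiv.Perm (Fin d) => M' (τ i, τ j) (τ k, τ l))
      rw [Matrix.sub_apply, Matrix.sub_apply, e1, rho_apply d hd, rho_apply d hd]
      simp only [σ.injective.eq_iff]
    · rintro ⟨i, j⟩ ⟨k, l⟩ h
      have e1 : R (i, j) (k, l) = 0 := by
        have : ∀ σ : Equiv.Perm (Fin d), ¬ matched (σ i, σ j) (σ k, σ l) := by
          intro σ
          simpa only [matched, σ.injective.eq_iff] using h
        simp [hR, hM', this]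
      rw [Matrix.sub_apply, e1, rho_apply d hd]
      simp only [matched, not_or] at h
      simp [h]
    · rw [map_sub, kT, hT, sub_self]
    · rw [map_sub, kF, hF, sub_self]
    · rw [map_sub, kO, hO, sub_self]
    · rw [map_sub, kD, hD, sub_self]
  rw [sub_eq_zero] at hz
  rw [← hz]; exact hRS

/-! ### Achievable invariants -/
def Ach (d k : ℕ) (n t s e : ℝ) : Prop :=
  ∃ M ∈ SchmidtSet d d k, tT d M = n ∧ tF d M = t ∧ tO d M = s ∧ tD d M = e

lemma Ach.add {d k : ℕ} {n t s e n' t' s' e' : ℝ} (h : Ach d k n t s e) (h' : Ach d k n' t' s' e') :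
    Ach d k (n + n') (t + t') (s + s') (e + e') := by
  obtain ⟨M, hM, h1, h2, h3, h4⟩ := h
  obtain ⟨M', hM', h1', h2', h3', h4'⟩ := h'
  exact ⟨M + M', sch_add hM hM', by simp [*], by simp [*], by simp [*], by simp [*]⟩

lemma Ach.smul {d k : ℕ} {n t s e : ℝ} (h : Ach d k n t s e) (c : ℝ) (hc : 0 ≤ c) :
    Ach d k (c * n) (c * t) (c * s) (c * e) := by
  obtain ⟨M, hM, h1, h2, h3, h4⟩ := h
  exact ⟨(c : ℂ) • M, sch_smul c hc hM, by simp [*], by simp [*], by simp [*], by simp [*]⟩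

lemma Ach.mix {d k : ℕ} {t s e t' s' e' : ℝ} (h : Ach d k 1 t s e) (h' : Ach d k 1 t' s' e')
    (c : ℝ) (hc : 0 ≤ c) (hc' : c ≤ 1) {t'' s'' e'' : ℝ} (ht : t'' = (1 - c) * t + c * t')
    (hs : s'' = (1 - c) * s + c * s') (he : e'' = (1 - c) * e + c * e') :
    Ach d k 1 t'' s'' e'' := by
  have := (h.smul (1 - c) (by linarith)).add (h'.smul c hc)
  rw [← ht, ← hs, ← he] at this
  convert this using 1; ring

lemma sum4 {d m : ℕ} (f : Fin d → Fin d → Fin m → Fin m → ℂ) :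
    ∑ x, ∑ y, ∑ j, ∑ l, f x y j l = ∑ j, ∑ l, ∑ x, ∑ y, f x y j l := by
  have := Finset.sum_comm (s := (Finset.univ : Finset (Fin d × Fin d)))
    (t := (Finset.univ : Finset (Fin m × Fin m))) (f := fun p q => f p.1 p.2 q.1 q.2)
  simpa only [Fintype.sum_prod_type] using this

/-- Vector with coefficient matrix `∑ⱼ uⱼ wⱼᵀ`. -/
lemma ach_fam {d k m : ℕ} (hm : m ≤ k) (u w : Fin m → Fin d → ℂ) (n t s e : ℝ)
    (hn : ∑ j, ∑ l, (∑ x, u j x * star (u l x)) * (∑ y, w j y * star (w l y)) = n)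
    (ht : ∑ j, ∑ l, (∑ x, u j x * star (w l x)) * (∑ y, w j y * star (u l y)) = t)
    (hs : (∑ j, ∑ x, u j x * w j x) * star (∑ j, ∑ x, u j x * w j x) = s)
    (he : ∑ j, ∑ l, ∑ x, (u j x * w j x) * star (u l x * w l x) = e) :
    Ach d k n t s e := by
  let ξ : Fin d × Fin d → ℂ := fun p => ∑ j, u j p.1 * w j p.2
  have hr : (Matrix.of fun a b => ξ (a, b)).rank ≤ k := by
    have : (Matrix.of fun a b => ξ (a, b)) =
        (Matrix.of fun (a : Fin d) (j : Fin m) => u j a) * (Matrix.of fun (j : Fin m) (b : Fin d) => w j b) := by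
      ext a b; simp [ξ, Matrix.mul_apply]
    rw [this]
    exact ((Matrix.rank_mul_le_left _ _).trans (Matrix.rank_le_width _)).trans hm
  refine ⟨vecMulVec ξ (star ξ), ⟨1, fun _ => ξ, fun _ => hr, by simp⟩, ?_, ?_, ?_, ?_⟩
  · rw [← hn]
    simp only [tT, LinearMap.coe_mk, AddHom.coe_mk, vecMulVec_apply, Pi.star_apply, ξ, star_sum,
      Finset.sum_mul_sum]
    rw [sum4 (fun x y j l => _)]
    refine Finset.sum_congr rfl fun j _ => Finset.sum_congr rfl fun l _ =>
      Finset.sum_congr rfl fun x _ => Finset.sum_congr rfl fun y _ => ?_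
    rw [star_mul']; ring
  · rw [← ht]
    simp only [tF, LinearMap.coe_mk, AddHom.coe_mk, vecMulVec_apply, Pi.star_apply, ξ, star_sum,
      Finset.sum_mul_sum]
    rw [sum4 (fun x y j l => _)]
    refine Finset.sum_congr rfl fun j _ => Finset.sum_congr rfl fun l _ =>
      Finset.sum_congr rfl fun x _ => Finset.sum_congr rfl fun y _ => ?_
    rw [star_mul']; ring
  · rw [← hs]
    simp only [tO, LinearMap.coe_mk, AddHom.coe_mk, vecMulVec_apply, Pi.star_apply, ξ]
    rw [← Finset.sum_mul_sum, ← star_sum, Finset.sum_comm]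
  · rw [← he]
    simp only [tD, LinearMap.coe_mk, AddHom.coe_mk, vecMulVec_apply, Pi.star_apply, ξ, star_sum,
      Finset.sum_mul_sum]
    rw [Finset.sum_comm]
    refine Finset.sum_congr rfl fun j _ => Finset.sum_comm

lemma ach_proj {d k : ℕ} (v : Fin k → Fin d → ℂ) (g t e : ℝ)
    (hg : ∀ j l, ∑ x, v j x * star (v l x) = if j = l then (g : ℂ) else 0)
    (ht : ∑ j, ∑ l, (∑ x, v j x * v l x) * star (∑ y, v j y * v l y) = t)
    (he : ∑ j, ∑ l, ∑ x, (v j x * star (v j x)) * (v l x * star (v l x)) = e) :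
    Ach d k (g ^ 2 * k) t (g ^ 2 * k ^ 2) e := by
  refine ach_fam le_rfl v (fun j x => star (v j x)) _ _ _ _ ?_ ?_ ?_ ?_
  · have : ∀ j l, ∑ y, star (v j y) * star (star (v l y)) = if j = l then (g : ℂ) else 0 := by
      intro j l
      have := hg l j
      simp only [eq_comm (a := l)] at this
      rw [← this]
      refine Finset.sum_congr rfl fun y _ => ?_
      rw [star_star]; ring
    simp only [hg, this]
    simp
    ring
  · rw [← ht]
    refine Finset.sum_congr rfl fun j _ => Finset.sum_congr rfl fun l _ => ?_
    simp
  · simp only [hg]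
    simp
    ring
  · rw [← he]
    refine Finset.sum_congr rfl fun j _ => Finset.sum_congr rfl fun l _ =>
      Finset.sum_congr rfl fun x _ => ?_
    rw [star_mul', star_star]; ring

/-! ### Vertex (−1, 0, 0), etc. -/
lemma ach_offdiag {d k : ℕ} (hk : 2 ≤ k) (hd : 2 ≤ d) (σ : ℝ) (hσ : σ ^ 2 = 1) : Ach d k 1 σ 0 0 := by
  let x : Fin d := ⟨0, by omega⟩
  let y : Fin d := ⟨1, by omega⟩
  have hxy : x ≠ y := by simp [x, y]
  have hyx := hxy.symm
  have hσ' : (σ : ℂ) * σ = 1 := by rw [← pow_two]; exact_mod_cast hσ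
  have := ach_fam hk (![Pi.single x 1, Pi.single y (σ : ℂ)]) (![Pi.single y 1, Pi.single x 1])
    2 (2 * σ) 0 0 (by
      simp [Fin.sum_univ_two, Pi.single_apply, hxy, hyx, hσ']; norm_num) (by
      simp [Fin.sum_univ_two, Pi.single_apply, hxy, hyx, hσ']; ring) (by
      simp [Fin.sum_univ_two, Pi.single_apply, hxy, hyx, hσ']) (by
      simp [Fin.sum_univ_two, Pi.single_apply, hxy, hyx, hσ'])
  have h2 := this.smul (1 / 2) (by norm_num)
  convert h2 using 1 <;> ring

lemma ach_diag {d k : ℕ} (hk : 2 ≤ k) (hd : 2 ≤ d) : Ach d k 1 1 0 1 := by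
  let x : Fin d := ⟨0, by omega⟩
  let y : Fin d := ⟨1, by omega⟩
  have hxy : x ≠ y := by simp [x, y]
  have hyx := hxy.symm
  have := ach_fam hk (![Pi.single x 1, Pi.single y (-1 : ℂ)]) (![Pi.single x 1, Pi.single y 1])
    2 2 0 2 (by
      simp [Fin.sum_univ_two, Pi.single_apply, hxy, hyx]; norm_num) (by
      simp [Fin.sum_univ_two, Pi.single_apply, hxy, hyx]; norm_num) (by
      simp [Fin.sum_univ_two, Pi.single_apply, hxy, hyx]) (by
      simp [Fin.sum_univ_two, Pi.single_apply, hxy, hyx]; norm_num)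
  have h2 := this.smul (1 / 2) (by norm_num)
  convert h2 using 1 <;> ring

lemma ach_coord {d k : ℕ} (hk : 1 < k) (hkd : 2 * k ≤ d) : Ach d k 1 1 k 1 := by
  have hk0 : (k : ℝ) ≠ 0 := by positivity
  let x : Fin k → Fin d := fun j => ⟨j, by omega⟩
  have hx : ∀ j l, x j = x l ↔ j = l := by intro j l; simp [x, Fin.ext_iff]
  have := ach_proj (fun j => Pi.single (x j) (1 : ℂ)) 1 k k (by
      intro j l; simp [Pi.single_apply, hx, eq_comm]) (by
      simp [Pi.single_apply, hx]) (by
      simp [Pi.single_apply, hx])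
  have h2 := this.smul (1 / k) (by positivity)
  convert h2 using 1 <;> field_simp

lemma ach_pairs {d k : ℕ} (hk : 1 < k) (hkd : 2 * k ≤ d) : Ach d k 1 0 k (1 / 2) := by
  have hk0 : (k : ℝ) ≠ 0 := by positivity
  let x : Fin k → Fin d := fun j => ⟨j, by omega⟩
  let y : Fin k → Fin d := fun j => ⟨k + j, by omega⟩
  have hx : ∀ j l, x j = x l ↔ j = l := by intro j l; simp [x, Fin.ext_iff]
  have hy : ∀ j l, y j = y l ↔ j = l := by intro j l; simp [y, Fin.ext_iff]
  have hxy : ∀ j l, x j ≠ y l := by intro j l; simp [x, y, Fin.ext_iff]; omega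
  have hyx : ∀ j l, y j ≠ x l := fun j l => (hxy l j).symm
  have hv : ∀ j a, (Pi.single (x j) (1 : ℂ) + Pi.single (y j) Complex.I : Fin d → ℂ) a
     = (if a = x j then 1 else 0) + (if a = y j then Complex.I else 0) := by
    intro j a; simp [Pi.single_apply]
  have habs : ∀ j a, (Pi.single (x j) (1 : ℂ) + Pi.single (y j) Complex.I : Fin d → ℂ) a *
     star ((Pi.single (x j) (1 : ℂ) + Pi.single (y j) Complex.I : Fin d → ℂ) a)
     = (if a = x j then 1 else 0) + (if a = y j then 1 else 0) := by
    intro j a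
    rw [hv]
    by_cases h1 : a = x j
    · have : a ≠ y j := h1 ▸ hxy j j
      simp [h1, hxy]
    · by_cases h2 : a = y j <;> simp [h1, h2, hyx]
  have := ach_proj (fun j => (Pi.single (x j) (1 : ℂ) + Pi.single (y j) Complex.I : Fin d → ℂ)) 2 0 (2 * k) (by
      intro j l
      simp only [hv, star_add, mul_add, add_mul, Finset.sum_add_distrib]
      simp [hx, hy, hxy, hyx]
      by_cases h : j = l
      · simp [h]; norm_num
      · simp [h, Ne.symm h]) (by
      simp only [hv, star_add, mul_add, add_mul, Finset.sum_add_distrib]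
      simp [hx, hy, hxy, hyx]) (by
      simp only [habs, mul_add, add_mul, Finset.sum_add_distrib]
      simp [hx, hy, hxy, hyx]
      ring)
  have h2 := this.smul (1 / (4 * k)) (by positivity)
  convert h2 using 1 <;> field_simp <;> norm_num

/-! ### Fourier vectors -/
lemma fourier_sum {d : ℕ} (hd : 0 < d) (m : ℤ) (h1 : -(d : ℤ) < m) (h2 : m < d) :
    ∑ x : Fin d, Complex.exp (2 * Real.pi * Complex.I * m * (x : ℕ) / d) = if m = 0 then (d : ℂ) else 0 := by
  have hd0 : (d : ℂ) ≠ 0 := by exact_mod_cast hd.ne'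
  split_ifs with h
  · simp [h]
  · set ζ := Complex.exp (2 * Real.pi * Complex.I * m / d) with hζ
    have e : ∀ x : ℕ, Complex.exp (2 * Real.pi * Complex.I * m * (x : ℕ) / d) = ζ ^ x := by
      intro x
      rw [hζ, ← Complex.exp_nat_mul]; congr 1; ring
    simp only [e]
    rw [Fin.sum_univ_eq_sum_range (fun x => ζ ^ x) d]
    have hz1 : ζ ≠ 1 := by
      rw [hζ, Ne, Complex.exp_eq_one_iff]
      rintro ⟨n, hn⟩
      have hpi : (2 * Real.pi * Complex.I : ℂ) ≠ 0 := Complex.two_pi_I_ne_zero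
      have : (m : ℂ) = n * d := by
        field_simp at hn
        rw [hn]; ring
      have h3 : m = n * d := by exact_mod_cast this
      have hn0 : n ≠ 0 := by rintro rfl; simp at h3; exact h h3
      rcases lt_or_gt_of_ne hn0 with hh | hh <;> nlinarith
    rw [geom_sum_eq hz1]
    have : ζ ^ d = 1 := by
      rw [hζ, ← Complex.exp_nat_mul, Complex.exp_eq_one_iff]
      exact ⟨m, by field_simp⟩
    simp [this]

lemma ach_fourier {d k : ℕ} (hd : 0 < d) (hk : k ≤ d) (hk0 : 0 < k) (c : ℝ) (c2 : ℤ) (hc : 2 * c = c2) (t : ℝ)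
    (hb : ∀ j l : Fin k, -(d : ℤ) < c2 + j + l ∧ c2 + j + l < d)
    (ht : ∑ j : Fin k, ∑ l : Fin k, (if c2 + j + l = 0 then 1 else 0 : ℝ) = t * k) :
    Ach d k 1 t k (k / d) := by
  have hdR : (d : ℝ) ≠ 0 := by positivity
  have hkR : (k : ℝ) ≠ 0 := by positivity
  have hd0 : (d : ℂ) ≠ 0 := by exact_mod_cast hd.ne'
  have hcc : (2 : ℂ) * c = c2 := by exact_mod_cast congrArg (fun z : ℝ => (z : ℂ)) hc
  have hstar : ∀ (j : Fin k) (x : Fin d),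
      star (Complex.exp (2 * Real.pi * Complex.I * (c + (j : ℕ)) * (x : ℕ) / d))
      = Complex.exp (-(2 * Real.pi * Complex.I * (c + (j : ℕ)) * (x : ℕ) / d)) := by
    intro j x
    rw [← starRingEnd_apply, ← Complex.exp_conj]
    congr 1
    have h2 : (starRingEnd ℂ) 2 = 2 := Complex.conj_ofNat 2
    simp [h2]
    ring
  have hB : ∀ j l : Fin k, ∑ x : Fin d, Complex.exp (2 * Real.pi * Complex.I * (c + (j : ℕ)) * (x : ℕ) / d) *
      Complex.exp (2 * Real.pi * Complex.I * (c + (l : ℕ)) * (x : ℕ) / d)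
      = if (c2 + j + l : ℤ) = 0 then (d : ℂ) else 0 := by
    intro j l
    rw [← fourier_sum hd (c2 + j + l) (hb j l).1 (hb j l).2]
    refine Finset.sum_congr rfl fun x _ => ?_
    rw [← Complex.exp_add]
    congr 1
    push_cast
    rw [← hcc]
    ring
  have := ach_proj (k := k) (fun j (x : Fin d) => Complex.exp (2 * Real.pi * Complex.I * (c + (j : ℕ)) * (x : ℕ) / d))
    d (d ^ 2 * (t * k)) (k ^ 2 * d) (by
      intro j l
      simp only [hstar]
      have h := fourier_sum hd ((j : ℤ) - l) (by omega) (by omega)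
      have e : ((j : ℤ) - l = 0) ↔ j = l := by rw [Fin.ext_iff]; omega
      simp only [e] at h
      simp only [Complex.ofReal_natCast]
      rw [← h]
      refine Finset.sum_congr rfl fun x _ => ?_
      rw [← Complex.exp_add]
      congr 1
      push_cast
      ring) (by
      simp only [hB]
      rw [← ht]
      push_cast
      simp only [Finset.mul_sum]
      refine Finset.sum_congr rfl fun j _ => Finset.sum_congr rfl fun l _ => ?_
      split_ifs <;> simp [pow_two]) (by
      simp only [hstar, ← Complex.exp_add]
      simp
      ring)
  have h2 := this.smul (1 / (d ^ 2 * k)) (by positivity)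
  convert h2 using 1 <;> field_simp

lemma ach_fourier_real {d k : ℕ} (hk : 1 < k) (hkd : 2 * k ≤ d) : Ach d k 1 1 k (k / d) := by
  refine ach_fourier (by omega) (by omega) (by omega) (-((k : ℝ) - 1) / 2) (-((k : ℤ) - 1))
    (by push_cast; ring) 1 (fun j l => ⟨by omega, by omega⟩) ?_
  have : ∀ j l : Fin k, (-((k : ℤ) - 1) + j + l = 0) ↔ l = Fin.rev j := by
    intro j l
    rw [Fin.ext_iff, Fin.val_rev]; omega
  simp only [this]
  simp

lemma ach_fourier_iso {d k : ℕ} (hk : 1 < k) (hkd : 2 * k ≤ d) : Ach d k 1 0 k (k / d) := by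
  refine ach_fourier (by omega) (by omega) (by omega) (1 / 2) 1
    (by push_cast; ring) 0 (fun j l => ⟨by omega, by omega⟩) ?_
  have : ∀ j l : Fin k, ¬ ((1 : ℤ) + j + l = 0) := by
    intro j l; omega
  simp [this]

lemma ach_all {d k : ℕ} (hd : 4 ≤ d) (hk : 1 < k) (hkd : 2 * k ≤ d) (s t : ℝ)
    (h1 : 0 ≤ s) (h2 : s ≤ k) (h3 : t ≤ 1) (h4 : s ≤ k * (1 + t)) :
    Ach d k 1 t s ((1 + t + s) / (d + 2)) := by
  have hd' : (4 : ℝ) ≤ d := by exact_mod_cast hd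
  have hk' : (1 : ℝ) < k := by exact_mod_cast hk
  have hkd' : 2 * (k : ℝ) ≤ d := by exact_mod_cast hkd
  have hd0 : (d : ℝ) ≠ 0 := by positivity
  have hd2 : (d : ℝ) + 2 ≠ 0 := by positivity
  have hk0 : (k : ℝ) ≠ 0 := by positivity
  have hdk : (0 : ℝ) < d - k := by linarith
  have A : Ach d k 1 (-1) 0 0 := ach_offdiag (by omega) (by omega) (-1) (by norm_num)
  have B : Ach d k 1 1 0 (2 / (d + 2)) :=
    (ach_offdiag (by omega) (by omega) 1 (by norm_num)).mix (ach_diag (by omega) (by omega))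
      (2 / (d + 2)) (by positivity) (by rw [div_le_one (by positivity)]; linarith)
      (by ring) (by ring) (by ring)
  have C : Ach d k 1 1 k ((k + 2) / (d + 2)) := by
    refine (ach_fourier_real hk hkd).mix (ach_coord hk hkd) (2 / (d + 2)) (by positivity)
      (by rw [div_le_one (by positivity)]; linarith) (by ring) (by ring) ?_
    field_simp
    ring
  have D : Ach d k 1 0 k ((k + 1) / (d + 2)) := by
    refine (ach_fourier_iso hk hkd).mix (ach_pairs hk hkd) (2 / (d + 2)) (by positivity)
      (by rw [div_le_one (by positivity)]; linarith) (by ring) (by ring) ?_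
    field_simp
    ring
  have hl0 : 0 ≤ s / k := by positivity
  have hl1 : s / k ≤ 1 := by rw [div_le_one (by positivity)]; exact h2
  have hl2 : s / k ≤ 1 + t := by rw [div_le_iff₀ (by positivity)]; linarith
  have hs : s = s / k * k := by field_simp
  generalize s / k = c at *
  have L := A.mix D c hl0 hl1 rfl rfl rfl
  have U := B.mix C c hl0 hl1 rfl rfl rfl
  have hc : (0 : ℝ) < 2 - c := by linarith
  refine L.mix U ((1 + t - c) / (2 - c)) (div_nonneg (by linarith) hc.le)
    (by rw [div_le_one hc]; linarith) ?_ ?_ ?_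
  · field_simp; ring
  · rw [hs]; ring
  · rw [hs]; field_simp; ring

lemma tD_rho (d : ℕ) (hd : 0 < d) (a b : ℝ) :
    tD d (rho d a b) = (((1 - a - b) / d + a + b : ℝ) : ℂ) := by
  have : (d : ℂ) ≠ 0 := by exact_mod_cast hd.ne'
  simp only [tD, LinearMap.coe_mk, AddHom.coe_mk, rho_apply d hd]
  simp
  field_simp

/-- For `d ≥ 4` and an integer `k` with `1 < k ≤ d/2`,
`ρ^{(d)}_{a,b} ∈ Sch_k` iff `-1/(d-1) ≤ (d+1)a + b ≤ (kd-1)/(d-1)`, `a + (d+1)b ≤ 1` and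
`-((d-k+1)/(kd+k-1)) a + b ≥ -1/(d-1)`. -/
theorem rho_schmidtNumber_iff_small {d k : ℕ} (hd : 4 ≤ d) (hk : 1 < k) (hkd : 2 * k ≤ d)
    (a b : ℝ) :
    rho d a b ∈ SchmidtSet d d k ↔
      (-(1 / ((d : ℝ) - 1)) ≤ ((d : ℝ) + 1) * a + b ∧
       ((d : ℝ) + 1) * a + b ≤ ((k : ℝ) * d - 1) / ((d : ℝ) - 1) ∧
       a + ((d : ℝ) + 1) * b ≤ 1 ∧
       -(1 / ((d : ℝ) - 1)) ≤ -(((d : ℝ) - k + 1) / ((k : ℝ) * d + k - 1)) * a + b) := by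
  have hd0 : 0 < d := by omega
  have hd' : (4 : ℝ) ≤ d := by exact_mod_cast hd
  rw [← cond_iff hd hk a b _ _ rfl rfl]
  constructor
  · intro h
    have := sch_ineq _ h
    rw [tT_rho d hd0, tF_rho d hd0, tO_rho d hd0] at this
    simpa only [Complex.ofReal_re, Complex.one_re, mul_one] using this
  · rintro ⟨h1, h2, h3, h4⟩
    obtain ⟨M, hM, e1, e2, e3, e4⟩ := ach_all hd hk hkd _ _ h1 h2 h3 h4
    refine key hd0 a b M hM ?_ ?_ ?_ ?_
    · rw [e1, tT_rho d hd0]; simp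
    · rw [e2, tF_rho d hd0]
    · rw [e3, tO_rho d hd0]
    · rw [e4, tD_rho d hd0]
      congr 1
      have : (d : ℝ) ≠ 0 := by positivity
      field_simp
      ring

end
end

section
/- Let d ≥ 2, let k be an integer with 1 ≤ k ≤ d, and a, b ∈ ℝ. Then ρ^{(d)}_{a,b} ∈ Sch_k if and only if for all p, q ∈ ℝ such that L^{(d)}_{p,q} is k-positive, one has (d+1)(pa + qb) + (pb + qa) ≥ −1/(d−1). -/
set_option linter.unusedSectionVars false

open Matrix
open scoped ComplexOrder

noncomputable section

/-! ### General tools -/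

theorem aux_isCompact_convexHull {E : Type*} [AddCommGroup E] [Module ℝ E] [TopologicalSpace E]
    [IsTopologicalAddGroup E] [ContinuousSMul ℝ E] [FiniteDimensional ℝ E] {s : Set E}
    (hs : IsCompact s) : IsCompact (convexHull ℝ s) := by
  classical
  rcases s.eq_empty_or_nonempty with rfl | ⟨s0, hs0⟩
  · simp
  set n := Module.finrank ℝ E + 1 with hn
  have hcomp : IsCompact ((stdSimplex ℝ (Fin n)) ×ˢ (Set.univ.pi fun _ : Fin n => s)) :=
    (isCompact_stdSimplex ℝ (Fin n)).prod (isCompact_univ_pi fun _ => hs)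
  have hcont : Continuous (fun q : (Fin n → ℝ) × (Fin n → E) => ∑ i, q.1 i • q.2 i) := by
    fun_prop
  have himg := hcomp.image hcont
  convert himg using 1
  apply Set.Subset.antisymm
  · intro x hx
    obtain ⟨ι, _, z, w, hz, hai, hw, hw1, hx⟩ := eq_pos_convex_span_of_mem_convexHull hx
    have hcard : Fintype.card ι ≤ Fintype.card (Fin n) := by
      have h1 := hai.card_le_finrank_succ
      have h2 := Submodule.finrank_le (vectorSpan ℝ (Set.range z))
      simp only [Fintype.card_fin]
      omega
    obtain ⟨e⟩ := Function.Embedding.nonempty_of_card_le hcard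
    refine ⟨(Function.extend e w 0, Function.extend e z fun _ => s0), ⟨⟨?_, ?_⟩, ?_⟩, ?_⟩
    · intro j
      by_cases hj : ∃ i, e i = j
      · obtain ⟨i, rfl⟩ := hj
        simp only [e.injective.extend_apply]
        exact (hw i).le
      · simp [Function.extend_apply' _ _ _ hj]
    · rw [← hw1]
      symm
      refine Fintype.sum_of_injective e e.injective _ _ ?_ ?_
      rotate_left
      · intro i; simp [e.injective.extend_apply]
      · intro j hj
        exact Function.extend_apply' _ _ _ hj
    · intro j _
      by_cases hj : ∃ i, e i = j
      · obtain ⟨i, rfl⟩ := hj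
        simp only [e.injective.extend_apply]
        exact hz ⟨i, rfl⟩
      · simpa [Function.extend_apply' _ _ _ hj] using hs0
    · rw [← hx]
      symm
      refine Fintype.sum_of_injective e e.injective _ _ ?_ ?_
      rotate_left
      · intro i; simp [e.injective.extend_apply]
      · intro j hj
        simp only
        rw [Function.extend_apply' _ _ _ hj]
        simp
  · rintro _ ⟨⟨w, z⟩, ⟨⟨hw, hw1⟩, hz⟩, rfl⟩
    exact mem_convexHull_of_exists_fintype w z hw hw1 (fun i => hz i trivial) rfl

theorem aux_rank_factor {d k : ℕ} (M : Matrix (Fin d) (Fin d) ℂ) (h : M.rank ≤ k) :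
    ∃ (A : Matrix (Fin d) (Fin k) ℂ) (B : Matrix (Fin k) (Fin d) ℂ), M = A * B := by
  have h' : Module.finrank ℂ (LinearMap.range (Matrix.toLin' M)) ≤
      Module.finrank ℂ (Fin k → ℂ) := by
    rw [Module.finrank_fin_fun]
    exact h
  obtain ⟨f, hf⟩ := finrank_le_iff_exists_linearMap.mp h'
  obtain ⟨g, hg⟩ := f.exists_leftInverse_of_injective (LinearMap.ker_eq_bot.mpr hf)
  refine ⟨LinearMap.toMatrix' ((LinearMap.range (Matrix.toLin' M)).subtype ∘ₗ g),
    LinearMap.toMatrix' (f ∘ₗ (Matrix.toLin' M).rangeRestrict), ?_⟩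
  rw [← LinearMap.toMatrix'_comp]
  apply (Matrix.toLin').injective
  rw [Matrix.toLin'_toMatrix']
  ext1 x
  ext1
  have := fun y => LinearMap.congr_fun hg y
  simp only [LinearMap.comp_apply, LinearMap.id_apply] at this
  simp [this]

theorem aux_isClosed_rank_le (d k : ℕ) :
    IsClosed {ξ : Fin d × Fin d → ℂ | (Matrix.of fun a b => ξ (a, b)).rank ≤ k} := by
  have h1 := isOpen_setOfPred_nat_le_rank (𝕜 := ℂ) (E := Fin d → ℂ) (F := Fin d → ℂ) (k + 1)
  let T : (Fin d × Fin d → ℂ) →ₗ[ℂ] ((Fin d → ℂ) →L[ℂ] (Fin d → ℂ)) :=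
    { toFun := fun ξ => LinearMap.toContinuousLinearMap
        (Matrix.toLin' (Matrix.of fun a b => ξ (a, b)))
      map_add' := by
        intro x y
        ext v i
        simp [Matrix.mulVec, dotProduct, add_mul, Finset.sum_add_distrib]
      map_smul' := by
        intro c x
        ext v i
        simp [Matrix.mulVec, dotProduct, mul_assoc, Finset.mul_sum] }
  have hT : Continuous T := T.continuous_of_finiteDimensional
  have h2 := (h1.preimage hT).isClosed_compl
  convert h2 using 1
  ext ξ
  simp only [Set.mem_ofPred_eq, Set.mem_compl_iff, Set.mem_preimage, not_le]
  have : ((T ξ : (Fin d → ℂ) →L[ℂ] (Fin d → ℂ)) : (Fin d → ℂ) →ₗ[ℂ] (Fin d → ℂ)) =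
      Matrix.toLin' (Matrix.of fun a b => ξ (a, b)) := by
    ext; simp [T]
  rw [this, LinearMap.rank, ← Module.finrank_eq_rank]
  rw [Nat.cast_lt, Nat.lt_succ_iff]
  rfl

/-! ### The three-parameter family of invariant tensors -/

/-- The tensor `α δ_{ij}δ_{kl} + β δ_{ik}δ_{jl} + γ δ_{il}δ_{jk}` as a bipartite matrix. -/
def ten (d : ℕ) (α β γ : ℂ) : Matrix (Fin d × Fin d) (Fin d × Fin d) ℂ :=
  Matrix.of fun x y =>
    α * ((if x.1 = x.2 then 1 else 0) * (if y.1 = y.2 then 1 else 0)) +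
    β * ((if x.1 = y.1 then 1 else 0) * (if x.2 = y.2 then 1 else 0)) +
    γ * ((if x.1 = y.2 then 1 else 0) * (if x.2 = y.1 then 1 else 0))

/-- Contraction against the unnormalised maximally entangled projection. -/
def ctO {d : ℕ} (X : Matrix (Fin d × Fin d) (Fin d × Fin d) ℂ) : ℂ := ∑ i, ∑ j, X (i, i) (j, j)
/-- The trace. -/
def ctT {d : ℕ} (X : Matrix (Fin d × Fin d) (Fin d × Fin d) ℂ) : ℂ := ∑ i, ∑ j, X (i, j) (i, j)
/-- Contraction against the flip. -/
def ctF {d : ℕ} (X : Matrix (Fin d × Fin d) (Fin d × Fin d) ℂ) : ℂ := ∑ i, ∑ j, X (i, j) (j, i)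

theorem trace_ten_mul {d : ℕ} (α β γ : ℂ) (X : Matrix (Fin d × Fin d) (Fin d × Fin d) ℂ) :
    (ten d α β γ * X).trace = α * ctO X + β * ctT X + γ * ctF X := by
  have h1 : ctO X = ∑ x : Fin d × Fin d, ∑ y : Fin d × Fin d,
      ((if x.1 = x.2 then 1 else 0) * (if y.1 = y.2 then 1 else 0)) * X y x := by
    simp only [ctO, Fintype.sum_prod_type, ite_mul, mul_ite, one_mul, zero_mul, mul_one, mul_zero]
    simp only [Finset.sum_ite_eq, Finset.mem_univ, if_true]
    rw [Finset.sum_comm]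
    simp
  have h2 : ctT X = ∑ x : Fin d × Fin d, ∑ y : Fin d × Fin d,
      ((if x.1 = y.1 then 1 else 0) * (if x.2 = y.2 then 1 else 0)) * X y x := by
    simp only [ctT, Fintype.sum_prod_type, ite_mul, mul_ite, one_mul, zero_mul, mul_one, mul_zero]
    simp
  have h3 : ctF X = ∑ x : Fin d × Fin d, ∑ y : Fin d × Fin d,
      ((if x.1 = y.2 then 1 else 0) * (if x.2 = y.1 then 1 else 0)) * X y x := by
    simp only [ctF, Fintype.sum_prod_type, ite_mul, mul_ite, one_mul, zero_mul, mul_one, mul_zero]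
    rw [Finset.sum_comm]
    simp
  rw [h1, h2, h3]
  simp only [Matrix.trace, Matrix.diag, Matrix.mul_apply, Finset.mul_sum, ← Finset.sum_add_distrib]
  refine Finset.sum_congr rfl fun x _ => Finset.sum_congr rfl fun y _ => ?_
  simp only [ten, Matrix.of_apply]
  ring

theorem rho_eq_ten (d : ℕ) (hd : 2 ≤ d) (a b : ℝ) :
    rho d a b = ten d (((a / d : ℝ)) : ℂ) (((1 - a - b) / d ^ 2 : ℝ) : ℂ) ((b / d : ℝ) : ℂ) := by
  have hs : ((Real.sqrt d : ℝ) : ℂ) * ((Real.sqrt d : ℝ) : ℂ) = d := by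
    rw [← Complex.ofReal_mul, Real.mul_self_sqrt (Nat.cast_nonneg d)]; simp
  have hs0 : ((Real.sqrt d : ℝ) : ℂ) ≠ 0 := by
    intro h
    rw [h] at hs
    have : (d : ℂ) ≠ 0 := by
      have : d ≠ 0 := by omega
      exact_mod_cast this
    simp at hs
    exact this hs.symm
  ext ⟨i, j⟩ ⟨k, l⟩
  simp only [rho, ten, omegaVec, flipMatrix, Matrix.add_apply, Matrix.smul_apply, smul_eq_mul,
    Matrix.vecMulVec_apply, Matrix.of_apply, Pi.star_apply, Matrix.one_apply, Prod.mk.injEq]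
  have e1 : ((a / d : ℝ) : ℂ) = a * (((1 / Real.sqrt d : ℝ) : ℂ) * ((1 / Real.sqrt d : ℝ) : ℂ)) := by
    push_cast
    rw [← hs]
    field_simp
  rw [e1]
  have e2 : star (((1 / Real.sqrt d : ℝ)) : ℂ) = (((1 / Real.sqrt d : ℝ)) : ℂ) :=
    Complex.conj_ofReal _
  generalize (((1 / Real.sqrt d : ℝ)) : ℂ) = c at e2
  rw [apply_ite star, e2, star_zero]
  have hI : ∀ (P : Prop) [Decidable P], (if P then c else 0) = c * (if P then 1 else 0) := by
    intro P _; split_ifs <;> simp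
  have hJ : ∀ (P Q : Prop) [Decidable P] [Decidable Q], (if P ∧ Q then (1 : ℂ) else 0) =
      (if P then 1 else 0) * (if Q then 1 else 0) := by
    intro P Q _ _
    by_cases hP : P <;> by_cases hQ : Q <;> simp [hP, hQ]
  rw [hI, hI, hJ, hJ]
  push_cast
  ring

theorem ten_conjTranspose (d : ℕ) (α β γ : ℂ) :
    (ten d α β γ)ᴴ = ten d (star α) (star β) (star γ) := by
  ext ⟨i, j⟩ ⟨k, l⟩
  simp only [ten, Matrix.conjTranspose_apply, Matrix.of_apply, star_add, star_mul',
    apply_ite star, star_one, star_zero]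
  have hc : ∀ a b : Fin d, (if a = b then (1 : ℂ) else 0) = if b = a then 1 else 0 := by
    intro a b; simp only [eq_comm]
  rw [hc k i, hc l j, hc k j, hc l i]
  ring

theorem ctO_ten (d : ℕ) (α β γ : ℂ) : ctO (ten d α β γ) = α * d ^ 2 + β * d + γ * d := by
  simp [ctO, ten, Finset.sum_add_distrib]
  ring
theorem ctT_ten (d : ℕ) (α β γ : ℂ) : ctT (ten d α β γ) = α * d + β * d ^ 2 + γ * d := by
  simp [ctT, ten, Finset.sum_add_distrib]
  ring
theorem ctF_ten (d : ℕ) (α β γ : ℂ) : ctF (ten d α β γ) = α * d + β * d + γ * d ^ 2 := by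
  simp [ctF, ten, Finset.sum_add_distrib]
  ring

theorem rho_isHermitian (d : ℕ) (hd : 2 ≤ d) (a b : ℝ) : (rho d a b).IsHermitian := by
  rw [Matrix.IsHermitian, rho_eq_ten d hd, ten_conjTranspose]
  simp

theorem trace_rho_mul_rho (d : ℕ) (hd : 2 ≤ d) (a b p q : ℝ) :
    (rho d p q * rho d a b).trace =
      (((1 + (d ^ 2 - 1) * (p * a + q * b) + (d - 1) * (p * b + q * a)) / d ^ 2 : ℝ) : ℂ) := by
  have : (d : ℂ) ≠ 0 := by
    have : d ≠ 0 := by omega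
    exact_mod_cast this
  rw [rho_eq_ten d hd p q, trace_ten_mul, rho_eq_ten d hd a b, ctO_ten, ctT_ten, ctF_ten]
  push_cast
  field_simp
  ring

theorem pairing_iff (d : ℕ) (hd : 2 ≤ d) (a b p q : ℝ) :
    -(1 / ((d : ℝ) - 1)) ≤ ((d : ℝ) + 1) * (p * a + q * b) + (p * b + q * a) ↔
      0 ≤ ((rho d p q * rho d a b).trace).re := by
  have h2 : (2 : ℝ) ≤ d := by exact_mod_cast hd
  have h1 : (0 : ℝ) < d - 1 := by linarith
  have h0 : (0 : ℝ) < (d : ℝ) ^ 2 := by positivity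
  rw [trace_rho_mul_rho d hd, Complex.ofReal_re, le_div_iff₀ h0, zero_mul, ← neg_div,
    div_le_iff₀ h1]
  constructor <;> intro h <;> nlinarith

theorem Lmap_apply (d : ℕ) (hd : 2 ≤ d) (p q : ℝ) (Z : Matrix (Fin d) (Fin d) ℂ) (i j : Fin d) :
    Lmap d p q Z i j = d * ∑ a, ∑ b, Z a b * rho d p q (a, i) (b, j) := by
  have : (d : ℂ) ≠ 0 := by
    have : d ≠ 0 := by omega
    exact_mod_cast this
  rw [rho_eq_ten d hd]
  simp only [ten, Matrix.of_apply, mul_add, Finset.sum_add_distrib]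
  have e1 : ∑ a, ∑ b, Z a b * (((p / d : ℝ) : ℂ) * ((if a = i then 1 else 0) *
      (if b = j then 1 else 0))) = ((p / d : ℝ) : ℂ) * Z i j := by
    simp [mul_comm]
  have e2 : ∑ a, ∑ b, Z a b * ((((1 - p - q) / d ^ 2 : ℝ) : ℂ) * ((if a = b then 1 else 0) *
      (if i = j then 1 else 0))) = (((1 - p - q) / d ^ 2 : ℝ) : ℂ) * (Z.trace *
      (if i = j then 1 else 0)) := by
    simp only [mul_ite, mul_zero, mul_one]
    by_cases hij : i = j
    · simp [hij, Matrix.trace, Finset.mul_sum, mul_comm]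
    · simp [hij]
  have e3 : ∑ a, ∑ b, Z a b * (((q / d : ℝ) : ℂ) * ((if a = j then 1 else 0) *
      (if i = b then 1 else 0))) = ((q / d : ℝ) : ℂ) * Z j i := by
    simp [mul_comm]
  rw [e1, e2, e3]
  have e4 : (Matrix.transposeLinearEquiv (Fin d) (Fin d) ℂ ℂ) Z i j = Z j i := rfl
  simp only [Lmap, LinearMap.add_apply, LinearMap.smul_apply, LinearMap.smulRight_apply,
    Matrix.add_apply, Matrix.smul_apply, Matrix.one_apply, smul_eq_mul,
    Matrix.traceLinearMap_apply, LinearMap.id_apply, LinearEquiv.coe_coe,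
    e4]
  push_cast
  field_simp
  ring

/-! ### `k`-positivity versus block positivity -/

/-- The operator `v ↦ ∑_t B_t ⊗ v_t`. -/
def auxK {d k : ℕ} (B : Fin k × Fin d → ℂ) : Matrix (Fin d × Fin d) (Fin k × Fin d) ℂ :=
  Matrix.of fun x y => B (y.1, x.1) * (if x.2 = y.2 then 1 else 0)

theorem auxK_mulVec {d k : ℕ} (B : Fin k × Fin d → ℂ) (v : Fin k × Fin d → ℂ) (b j : Fin d) :
    (auxK B *ᵥ v) (b, j) = ∑ t, B (t, b) * v (t, j) := by
  simp [Matrix.mulVec, dotProduct, auxK, Fintype.sum_prod_type]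

theorem auxK_rank {d k : ℕ} (B : Fin k × Fin d → ℂ) (v : Fin k × Fin d → ℂ) :
    (Matrix.of fun a b => (auxK B *ᵥ v) (a, b)).rank ≤ k := by
  have : (Matrix.of fun a b => (auxK B *ᵥ v) (a, b)) =
      (Matrix.of fun (b : Fin d) (t : Fin k) => B (t, b)) *
      (Matrix.of fun (t : Fin k) (j : Fin d) => v (t, j)) := by
    ext a b
    rw [Matrix.of_apply, auxK_mulVec, Matrix.mul_apply]
    rfl
  rw [this]
  refine (Matrix.rank_mul_le_left _ _).trans ?_
  exact (Matrix.rank_le_width _)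

theorem idTensor_eq {d k : ℕ} (hd : 2 ≤ d) (p q : ℝ) {ι : Type*} [Fintype ι]
    (B : Matrix ι (Fin k × Fin d) ℂ) :
    idTensor (Lmap d p q) (Bᴴ * B) = (d : ℂ) • ∑ m, (auxK (B m))ᴴ * rho d p q * auxK (B m) := by
  ext ⟨s, i⟩ ⟨t, j⟩
  simp only [idTensor, Matrix.of_apply, Lmap_apply d hd, Matrix.smul_apply, smul_eq_mul,
    Matrix.sum_apply]
  congr 1
  have h : ∀ m, ((auxK (B m))ᴴ * rho d p q * auxK (B m)) (s, i) (t, j) =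
      ∑ a, ∑ b, star (B m (s, a)) * B m (t, b) * rho d p q (a, i) (b, j) := by
    intro m
    simp only [Matrix.mul_apply, Matrix.conjTranspose_apply, auxK, Matrix.of_apply,
      Fintype.sum_prod_type, apply_ite star, star_zero, mul_ite, mul_one,
      mul_zero, ite_mul, zero_mul, Finset.sum_ite_eq', Finset.mem_univ, if_true, Finset.sum_mul]
    rw [Finset.sum_comm]
    refine Finset.sum_congr rfl fun a _ => Finset.sum_congr rfl fun b _ => ?_
    ring
  simp only [h, Matrix.mul_apply, Matrix.conjTranspose_apply, Finset.sum_mul]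
  symm
  rw [Finset.sum_comm]
  refine Finset.sum_congr rfl fun a _ => ?_
  rw [Finset.sum_comm]

theorem qf_conj {m n : Type*} [Fintype m] [Fintype n] (K : Matrix m n ℂ) (W : Matrix m m ℂ)
    (v : n → ℂ) : star v ⬝ᵥ ((Kᴴ * W * K) *ᵥ v) = star (K *ᵥ v) ⬝ᵥ (W *ᵥ (K *ᵥ v)) := by
  rw [← Matrix.mulVec_mulVec, ← Matrix.mulVec_mulVec, Matrix.dotProduct_mulVec,
    Matrix.star_mulVec]

theorem qf_nonneg {n : Type*} [Fintype n] (W : Matrix n n ℂ) (hW : W.IsHermitian) (v : n → ℂ) :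
    0 ≤ star v ⬝ᵥ (W *ᵥ v) ↔ 0 ≤ (star v ⬝ᵥ (W *ᵥ v)).re := by
  rw [Complex.nonneg_iff]
  constructor
  · exact fun h => h.1
  · intro h
    refine ⟨h, ?_⟩
    have := hW.im_star_dotProduct_mulVec_self v
    exact this.symm

theorem isKPositive_iff {d k : ℕ} (hd : 2 ≤ d) (p q : ℝ) :
    IsKPositive k (Lmap d p q) ↔ ∀ ξ : Fin d × Fin d → ℂ,
      (Matrix.of fun a b => ξ (a, b)).rank ≤ k → 0 ≤ (star ξ ⬝ᵥ (rho d p q *ᵥ ξ)).re := by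
  have hd0 : (0 : ℝ) < d := by
    have : 0 < d := by omega
    exact_mod_cast this
  have hdn : (0 : ℂ) ≤ (d : ℂ) := by
    rw [← Complex.ofReal_natCast]
    exact_mod_cast hd0.le
  have hherm := rho_isHermitian d hd p q
  constructor
  · intro h ξ hξ
    obtain ⟨A, C, hAC⟩ := aux_rank_factor _ hξ
    let B : Matrix Unit (Fin k × Fin d) ℂ := Matrix.of fun _ x => A x.2 x.1
    have h1 := h (Bᴴ * B) (Matrix.posSemidef_conjTranspose_mul_self B)
    rw [idTensor_eq hd] at h1
    have h2 := h1.dotProduct_mulVec_nonneg (fun x => C x.1 x.2)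
    have h3 : auxK (B ()) *ᵥ (fun x => C x.1 x.2) = ξ := by
      ext ⟨b, j⟩
      rw [auxK_mulVec]
      have := congrFun (congrFun hAC b) j
      rw [Matrix.of_apply, Matrix.mul_apply] at this
      rw [this]
      rfl
    simp only [Finset.univ_unique, Finset.sum_singleton, Matrix.smul_mulVec, dotProduct_smul,
      qf_conj, PUnit.default_eq_unit, h3, smul_eq_mul] at h2
    have h4 := (Complex.nonneg_iff.mp h2).1
    rw [← Complex.ofReal_natCast, Complex.re_ofReal_mul] at h4
    exact nonneg_of_mul_nonneg_right h4 hd0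
  · intro h X hX
    obtain ⟨B, rfl⟩ : ∃ B : Matrix (Fin k × Fin d) (Fin k × Fin d) ℂ, X = Bᴴ * B := by
      open scoped MatrixOrder in
      exact CStarAlgebra.nonneg_iff_eq_star_mul_self.mp hX.nonneg
    rw [idTensor_eq hd]
    refine Matrix.PosSemidef.smul ?_ hdn
    refine Matrix.posSemidef_sum _ fun m _ => ?_
    refine .of_dotProduct_mulVec_nonneg (Matrix.isHermitian_conjTranspose_mul_mul _ hherm)
      fun v => ?_
    rw [qf_conj, qf_nonneg _ hherm]
    exact h _ (auxK_rank _ _)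

/-! ### Orthogonal invariance -/

/-- Real orthogonal matrices (with complex entries). -/
def IsOrth {d : ℕ} (O : Matrix (Fin d) (Fin d) ℂ) : Prop :=
  (∀ i j, star (O i j) = O i j) ∧ (O * Oᵀ = 1)

/-- Conjugation by `O ⊗ O`. -/
def conjO {d : ℕ} (O : Matrix (Fin d) (Fin d) ℂ) (W : Matrix (Fin d × Fin d) (Fin d × Fin d) ℂ) :
    Matrix (Fin d × Fin d) (Fin d × Fin d) ℂ :=
  (Matrix.kroneckerMap (· * ·) O O) * W * (Matrix.kroneckerMap (· * ·) O O)ᴴ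

theorem conjO_apply {d : ℕ} {O : Matrix (Fin d) (Fin d) ℂ} (hO : IsOrth O)
    (W : Matrix (Fin d × Fin d) (Fin d × Fin d) ℂ) (i j k l : Fin d) :
    conjO O W (i, j) (k, l) = ∑ c, ∑ e, ∑ a, ∑ b, O i a * O j b * W (a, b) (c, e) *
      (O k c * O l e) := by
  simp only [conjO, Matrix.mul_apply, Fintype.sum_prod_type, Matrix.conjTranspose_apply,
    Matrix.kroneckerMap_apply, star_mul', hO.1, Finset.sum_mul]

theorem IsOrth.sum_eq {d : ℕ} {O : Matrix (Fin d) (Fin d) ℂ} (hO : IsOrth O) (i k : Fin d) :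
    ∑ a, O i a * O k a = if i = k then 1 else 0 := by
  have := congrFun (congrFun hO.2 i) k
  rwa [Matrix.mul_apply, Matrix.one_apply] at this

theorem conjO_ten {d : ℕ} {O : Matrix (Fin d) (Fin d) ℂ} (hO : IsOrth O) (α β γ : ℂ) :
    conjO O (ten d α β γ) = ten d α β γ := by
  ext ⟨i, j⟩ ⟨k, l⟩
  rw [conjO_apply hO]
  simp only [ten, Matrix.of_apply]
  simp only [mul_add, add_mul, Finset.sum_add_distrib]
  congr 1
  · congr 1
    · rw [← hO.sum_eq i j, ← hO.sum_eq k l, Finset.sum_mul_sum, Finset.sum_comm, Finset.mul_sum]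
      simp only [mul_ite, ite_mul, mul_one, one_mul, mul_zero, zero_mul]
      simp only [Finset.sum_ite_eq, Finset.mem_univ, if_true, Finset.mul_sum,
        Finset.sum_ite_irrel, Finset.sum_const_zero]
      rw [Finset.sum_comm]
      simp only [Finset.sum_ite_eq, Finset.mem_univ, if_true]
      rw [Finset.sum_comm]
      refine Finset.sum_congr rfl fun a _ => Finset.sum_congr rfl fun b _ => ?_
      ring
    · rw [← hO.sum_eq i k, ← hO.sum_eq j l, Finset.sum_mul_sum, Finset.mul_sum]
      simp only [mul_ite, ite_mul, mul_one, one_mul, mul_zero, zero_mul]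
      simp only [Finset.sum_ite_eq', Finset.mem_univ, if_true, Finset.mul_sum,
        Finset.sum_ite_irrel, Finset.sum_const_zero]
      refine Finset.sum_congr rfl fun a _ => Finset.sum_congr rfl fun b _ => ?_
      ring
  · rw [← hO.sum_eq i l, ← hO.sum_eq j k, Finset.sum_mul_sum, Finset.mul_sum]
    simp only [mul_ite, ite_mul, mul_one, one_mul, mul_zero, zero_mul]
    simp only [Finset.sum_ite_eq', Finset.mem_univ, if_true, Finset.mul_sum,
      Finset.sum_ite_irrel, Finset.sum_const_zero]
    rw [Finset.sum_comm]
    refine Finset.sum_congr rfl fun a _ => Finset.sum_congr rfl fun b _ => ?_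
    ring

/-- Signed permutation matrices. -/
def monoM {d : ℕ} (s : Fin d → ℂ) (σ : Equiv.Perm (Fin d)) : Matrix (Fin d) (Fin d) ℂ :=
  Matrix.of fun i a => if a = σ i then s i else 0

theorem monoM_isOrth {d : ℕ} (s : Fin d → ℂ) (σ : Equiv.Perm (Fin d))
    (hs : ∀ i, s i = 1 ∨ s i = -1) : IsOrth (monoM s σ) := by
  constructor
  · intro i j
    simp only [monoM, Matrix.of_apply]
    split_ifs
    · rcases hs i with h | h <;> simp [h]
    · simp
  · ext i k
    rw [Matrix.mul_apply, Matrix.one_apply]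
    simp only [monoM, Matrix.of_apply, Matrix.transpose_apply, ite_mul, zero_mul,
      Finset.sum_ite_eq', Finset.mem_univ, if_true]
    by_cases h : i = k
    · subst h
      rcases hs i with h | h <;> simp [h]
    · have : σ i ≠ σ k := fun h' => h (σ.injective h')
      simp [h, this]

theorem conjO_monoM {d : ℕ} (s : Fin d → ℂ) (σ : Equiv.Perm (Fin d))
    (hs : ∀ i, s i = 1 ∨ s i = -1) (W : Matrix (Fin d × Fin d) (Fin d × Fin d) ℂ)
    (i j k l : Fin d) :
    conjO (monoM s σ) W (i, j) (k, l) =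
      s i * s j * W (σ i, σ j) (σ k, σ l) * (s k * s l) := by
  rw [conjO_apply (monoM_isOrth s σ hs)]
  simp only [monoM, Matrix.of_apply, ite_mul, mul_ite, zero_mul, mul_zero]
  simp

theorem exists_perm_two {d : ℕ} {x y a b : Fin d} (hxy : x ≠ y) (hab : a ≠ b) :
    ∃ σ : Equiv.Perm (Fin d), σ x = a ∧ σ y = b := by
  refine ⟨(Equiv.swap x a).trans (Equiv.swap (Equiv.swap x a y) b), ?_, ?_⟩
  · have : a ≠ Equiv.swap x a y := by
      intro h
      have h2 : Equiv.swap x a x = Equiv.swap x a y := by rw [Equiv.swap_apply_left]; exact h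
      exact hxy ((Equiv.swap x a).injective h2)
    simp [Equiv.swap_apply_of_ne_of_ne this hab]
  · simp

theorem exists_orth_fourth {d : ℕ} {x y : Fin d} (hxy : x ≠ y) :
    ∃ O : Matrix (Fin d) (Fin d) ℂ, IsOrth O ∧ ∑ a, (O x a) ^ 4 ≠ 1 := by
  let v : Fin d → ℂ := fun a => if a = x then 3 / 5 else if a = y then 4 / 5 else 0
  have hv : v ⬝ᵥ v = 1 := by
    rw [dotProduct, Fintype.sum_eq_add x y hxy]
    · simp [v, hxy.symm]; norm_num
    · rintro a ⟨h1, h2⟩; simp [v, h1, h2]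
  have hvs : ∀ a, star (v a) = v a := by
    intro a
    simp only [v]
    split_ifs
    · simp
    · simp
    · simp
  refine ⟨1 - (2 : ℂ) • Matrix.vecMulVec v v, ⟨?_, ?_⟩, ?_⟩
  · intro i j
    have h1 : star ((1 : Matrix (Fin d) (Fin d) ℂ) i j) = (1 : Matrix (Fin d) (Fin d) ℂ) i j := by
      rw [Matrix.one_apply]; split_ifs <;> simp
    have h2 : star (2 : ℂ) = 2 := by simp
    simp only [Matrix.sub_apply, Matrix.smul_apply, Matrix.vecMulVec_apply, smul_eq_mul, star_sub,
      star_mul', hvs, h1, h2]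
  · rw [Matrix.transpose_sub, Matrix.transpose_one, Matrix.transpose_smul,
      Matrix.transpose_vecMulVec, sub_mul, one_mul, mul_sub, mul_one,
      Matrix.smul_mul, Matrix.mul_smul, Matrix.vecMulVec_mul_vecMulVec, hv, one_smul, smul_smul]
    module
  · rw [Fintype.sum_eq_add x y hxy]
    · simp [v, Matrix.vecMulVec_apply, hxy, hxy.symm]; norm_num
    · rintro a ⟨h1, h2⟩; simp [v, Matrix.vecMulVec_apply, h1, h2, Matrix.one_apply, Ne.symm h1]

theorem eq_ten_of_invariant {d : ℕ} (hd : 2 ≤ d) (W : Matrix (Fin d × Fin d) (Fin d × Fin d) ℂ)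
    (hW : ∀ O, IsOrth O → conjO O W = W) : ∃ α β γ : ℂ, W = ten d α β γ := by
  have hmono : ∀ (s : Fin d → ℂ) (σ : Equiv.Perm (Fin d)), (∀ i, s i = 1 ∨ s i = -1) →
      ∀ i j k l, W (i, j) (k, l) = s i * s j * W (σ i, σ j) (σ k, σ l) * (s k * s l) := by
    intro s σ hs i j k l
    rw [← conjO_monoM s σ hs, hW _ (monoM_isOrth s σ hs)]
  have hperm : ∀ (σ : Equiv.Perm (Fin d)) i j k l,
      W (σ i, σ j) (σ k, σ l) = W (i, j) (k, l) := by
    intro σ i j k l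
    have := hmono (fun _ => 1) σ (fun _ => Or.inl rfl) i j k l
    simpa using this.symm
  have hsign : ∀ m i j k l : Fin d, W (i, j) (k, l) =
      (if i = m then -1 else 1) * (if j = m then -1 else 1) * W (i, j) (k, l) *
      ((if k = m then -1 else 1) * (if l = m then -1 else 1)) := by
    intro m i j k l
    refine hmono (fun i => if i = m then -1 else 1) 1 ?_ i j k l
    intro i
    by_cases h : i = m <;> simp [h]
  have hneg : ∀ z : ℂ, z = -z → z = 0 := fun z hz => self_eq_neg.mp hz
  let x : Fin d := ⟨0, by omega⟩
  let y : Fin d := ⟨1, by omega⟩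
  have hxy : x ≠ y := by simp [x, y]
  set α := W (x, x) (y, y) with hα
  set β := W (x, y) (x, y) with hβ
  set γ := W (x, y) (y, x) with hγ
  set κ := W (x, x) (x, x) - α - β - γ with hκ
  have hform : ∀ i j k l, W (i, j) (k, l) = ten d α β γ (i, j) (k, l) +
      κ * (if i = j ∧ j = k ∧ k = l then 1 else 0) := by
    intro i j k l
    simp only [ten, Matrix.of_apply]
    by_cases hij : i = j
    · subst hij
      by_cases hkl : k = l
      · subst hkl
        by_cases hik : i = k
        · subst hik
          have := hperm (Equiv.swap x i) x x x x
          rw [Equiv.swap_apply_left] at this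
          rw [this]
          simp only [hκ, and_self, if_true]
          ring
        · obtain ⟨σ, h1, h2⟩ := exists_perm_two hxy hik
          have := hperm σ x x y y
          rw [h1, h2] at this
          rw [this]
          simp [hik, hα]
      · have h0 : W (i, i) (k, l) = 0 := by
          apply hneg
          by_cases hik : i = k
          · subst hik
            have := hsign l i i i l
            simpa [hkl] using this
          · have := hsign k i i k l
            simpa [hik, Ne.symm hkl] using this
        rw [h0]
        by_cases hik : i = k
        · subst hik; simp [hkl]
        · simp [hkl, hik]
    · by_cases hkl : k = l
      · subst hkl
        have h0 : W (i, j) (k, k) = 0 := by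
          apply hneg
          have := hsign i i j k k
          by_cases hik : k = i
          · simpa [hik, Ne.symm hij] using this
          · simpa [hik, Ne.symm hij] using this
        rw [h0]
        by_cases hik : i = k
        · subst hik; simp [hij, Ne.symm hij]
        · simp [hij, hik]
      · by_cases hik : i = k
        · subst hik
          by_cases hjl : j = l
          · subst hjl
            obtain ⟨σ, h1, h2⟩ := exists_perm_two hxy hij
            have := hperm σ x y x y
            rw [h1, h2] at this
            rw [this]
            simp [hij, hβ]
          · have h0 : W (i, j) (i, l) = 0 := by
              apply hneg
              have := hsign j i j i l
              simpa [hij, Ne.symm hjl] using this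
            rw [h0]
            simp [hij, hjl, Ne.symm hij]
        · by_cases hil : i = l
          · subst hil
            by_cases hjk : j = k
            · subst hjk
              obtain ⟨σ, h1, h2⟩ := exists_perm_two hxy hij
              have := hperm σ x y y x
              rw [h1, h2] at this
              rw [this]
              simp [hij, hγ]
            · have h0 : W (i, j) (k, i) = 0 := by
                apply hneg
                have := hsign j i j k i
                simpa [hij, Ne.symm hjk] using this
              rw [h0]
              simp [hij, hjk, hik]
          · have h0 : W (i, j) (k, l) = 0 := by
              apply hneg
              have := hsign i i j k l
              simpa [Ne.symm hij, Ne.symm hik, Ne.symm hil] using this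
            rw [h0]
            simp [hij, hik, hil]
  obtain ⟨O, hO, h4⟩ := exists_orth_fourth hxy
  have hκ0 : κ = 0 := by
    have h1 : conjO O W (x, x) (x, x) = W (x, x) (x, x) := by rw [hW O hO]
    have h2 : conjO O (ten d α β γ) (x, x) (x, x) = ten d α β γ (x, x) (x, x) := by
      rw [conjO_ten hO]
    rw [conjO_apply hO] at h1 h2
    simp only [hform] at h1
    simp only [mul_add, add_mul, Finset.sum_add_distrib] at h1
    rw [h2] at h1
    have h3 : ∑ c, ∑ e, ∑ a, ∑ b, O x a * O x b * (κ * (if a = b ∧ b = c ∧ c = e then 1 else 0)) *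
        (O x c * O x e) = κ * ∑ a, (O x a) ^ 4 := by
      simp only [ite_and, mul_ite, ite_mul, mul_zero, mul_one, zero_mul, Finset.sum_ite_eq,
        Finset.mem_univ, if_true, Finset.sum_ite_irrel, Finset.sum_const_zero, Finset.mul_sum,
        Finset.sum_ite_eq']
      refine Finset.sum_congr rfl fun a _ => ?_
      ring
    rw [h3] at h1
    simp only [and_self, if_true, mul_one] at h1
    have h5 : κ * (∑ a, (O x a) ^ 4 - 1) = 0 := by linear_combination h1
    rcases mul_eq_zero.mp h5 with h | h
    · exact h
    · exact absurd (sub_eq_zero.mp h) h4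
  refine ⟨α, β, γ, ?_⟩
  ext ⟨i, j⟩ ⟨k, l⟩
  rw [hform, hκ0, zero_mul, add_zero]

/-! ### Projection onto the set of normalised states -/

/-- Real Hilbert–Schmidt inner product. -/
def ip {n : Type*} [Fintype n] (X Y : Matrix n n ℂ) : ℝ := ((Xᴴ * Y).trace).re

section ipsec
variable {n : Type*} [Fintype n]

theorem ip_comm (X Y : Matrix n n ℂ) : ip X Y = ip Y X := by
  have : (Yᴴ * X) = (Xᴴ * Y)ᴴ := by simp
  rw [ip, ip, this, Matrix.trace_conjTranspose]
  simp

theorem ip_add_right (X Y Z : Matrix n n ℂ) : ip X (Y + Z) = ip X Y + ip X Z := by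
  simp [ip, Matrix.mul_add]

theorem ip_sub_right (X Y Z : Matrix n n ℂ) : ip X (Y - Z) = ip X Y - ip X Z := by
  simp [ip, Matrix.mul_sub]

theorem ip_smul_right (t : ℝ) (X Y : Matrix n n ℂ) : ip X (t • Y) = t * ip X Y := by
  simp [ip]

theorem ip_add_left (X Y Z : Matrix n n ℂ) : ip (X + Y) Z = ip X Z + ip Y Z := by
  rw [ip_comm, ip_add_right, ip_comm Z, ip_comm Z]

theorem ip_sub_left (X Y Z : Matrix n n ℂ) : ip (X - Y) Z = ip X Z - ip Y Z := by
  rw [ip_comm, ip_sub_right, ip_comm Z, ip_comm Z]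

theorem ip_smul_left (t : ℝ) (X Y : Matrix n n ℂ) : ip (t • X) Y = t * ip X Y := by
  rw [ip_comm, ip_smul_right, ip_comm]

theorem ip_self_nonneg (X : Matrix n n ℂ) : 0 ≤ ip X X :=
  (Complex.nonneg_iff.mp (Matrix.posSemidef_conjTranspose_mul_self X).trace_nonneg).1

theorem ip_self_eq_zero (X : Matrix n n ℂ) (h : ip X X = 0) : X = 0 := by
  rw [← Matrix.trace_conjTranspose_mul_self_eq_zero_iff]
  have h2 := Complex.nonneg_iff.mp (Matrix.posSemidef_conjTranspose_mul_self X).trace_nonneg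
  exact Complex.ext h h2.2.symm

theorem ip_variational {C : Set (Matrix n n ℂ)} (hC : Convex ℝ C) (R P : Matrix n n ℂ)
    (hP : P ∈ C) (hmin : ∀ X ∈ C, ip (P - R) (P - R) ≤ ip (X - R) (X - R)) :
    ∀ X ∈ C, 0 ≤ ip (P - R) (X - P) := by
  intro X hX
  by_contra hneg
  push Not at hneg
  set v := ip (P - R) (X - P) with hv
  set m := ip (X - P) (X - P) with hm
  have hm0 : 0 ≤ m := ip_self_nonneg _
  have hden : 0 < m - v := by linarith
  set t := -v / (m - v) with ht
  have ht0 : 0 < t := div_pos (by linarith) hden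
  have ht1 : t ≤ 1 := by rw [ht, div_le_one hden]; linarith
  have hmem : P + t • (X - P) ∈ C := hC.add_smul_sub_mem hP hX ⟨ht0.le, ht1⟩
  have h1 := hmin _ hmem
  have h2 : P + t • (X - P) - R = (P - R) + t • (X - P) := by abel
  rw [h2, ip_add_left, ip_add_right, ip_add_right, ip_smul_left, ip_smul_left, ip_smul_right,
    ip_smul_right, ip_comm (X - P) (P - R), ← hv, ← hm] at h1
  have h3 : t * (m - v) = -v := by rw [ht]; field_simp
  have h4 : t * m = t * v - v := by linarith
  rw [h4] at h1
  have h5 : t * v < 0 := mul_neg_of_pos_of_neg ht0 hneg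
  nlinarith [mul_pos ht0 ht0, mul_neg_of_pos_of_neg ht0 h5]

end ipsec

/-- The set of normalised pure states of Schmidt rank at most `k`. -/
def pureSet (d k : ℕ) : Set (Matrix (Fin d × Fin d) (Fin d × Fin d) ℂ) :=
  (fun ξ => Matrix.vecMulVec ξ (star ξ)) ''
    {ξ : Fin d × Fin d → ℂ | (Matrix.of fun a b => ξ (a, b)).rank ≤ k ∧ ∑ x, ‖ξ x‖ ^ 2 = 1}

theorem pureSet_compact (d k : ℕ) : IsCompact (pureSet d k) := by
  apply IsCompact.image
  · apply Metric.isCompact_of_isClosed_isBounded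
    · apply IsClosed.and
      · exact aux_isClosed_rank_le d k
      · exact isClosed_eq (by fun_prop) continuous_const
    · refine (Metric.isBounded_closedBall (x := (0 : Fin d × Fin d → ℂ)) (r := 1)).subset ?_
      rintro ξ ⟨_, hξ⟩
      rw [mem_closedBall_zero_iff, pi_norm_le_iff_of_nonneg zero_le_one]
      intro x
      have : ‖ξ x‖ ^ 2 ≤ 1 := by
        rw [← hξ]
        exact Finset.single_le_sum (f := fun x => ‖ξ x‖ ^ 2) (fun _ _ => by positivity)
          (Finset.mem_univ x)
      exact (sq_le_one_iff₀ (norm_nonneg _)).mp this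
  · fun_prop

theorem SchmidtSet_convex (d k : ℕ) : Convex ℝ (SchmidtSet d d k) := by
  have hsmul : ∀ X ∈ SchmidtSet d d k, ∀ t : ℝ, 0 ≤ t → t • X ∈ SchmidtSet d d k := by
    rintro X ⟨N, ξ, hξ, rfl⟩ t ht
    refine ⟨N, fun i => ((Real.sqrt t : ℝ) : ℂ) • ξ i, ?_, ?_⟩
    · intro i
      have : (Matrix.of fun a b => (((Real.sqrt t : ℝ) : ℂ) • ξ i) (a, b)) =
          (((Real.sqrt t : ℝ) : ℂ) • (1 : Matrix (Fin d) (Fin d) ℂ)) *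
            (Matrix.of fun a b => ξ i (a, b)) := by
        rw [Matrix.smul_mul, one_mul]; rfl
      rw [this]
      exact (Matrix.rank_mul_le_right _ _).trans (hξ i)
    · rw [Finset.smul_sum]
      refine Finset.sum_congr rfl fun i _ => ?_
      ext x y
      have : (t : ℂ) = ((Real.sqrt t : ℝ) : ℂ) * ((Real.sqrt t : ℝ) : ℂ) := by
        rw [← Complex.ofReal_mul, Real.mul_self_sqrt ht]
      simp only [Matrix.smul_apply, Matrix.vecMulVec_apply, Pi.star_apply, Pi.smul_apply,
        smul_eq_mul, Complex.real_smul, star_mul', this]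
      have h2 : star ((Real.sqrt t : ℝ) : ℂ) = ((Real.sqrt t : ℝ) : ℂ) := Complex.conj_ofReal _
      rw [h2]
      ring
  have hadd : ∀ X ∈ SchmidtSet d d k, ∀ Y ∈ SchmidtSet d d k, X + Y ∈ SchmidtSet d d k := by
    rintro X ⟨N, ξ, hξ, rfl⟩ Y ⟨M, η, hη, rfl⟩
    refine ⟨N + M, Fin.append ξ η, ?_, ?_⟩
    · intro i
      refine Fin.addCases (fun j => ?_) (fun j => ?_) i
      · simpa only [Fin.append_left] using hξ j
      · simpa only [Fin.append_right] using hη j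
    · rw [Fin.sum_univ_add]
      simp only [Fin.append_left, Fin.append_right]
  intro X hX Y hY s t hs ht _
  exact hadd _ (hsmul X hX s hs) _ (hsmul Y hY t ht)

theorem hull_subset_Schmidt (d k : ℕ) : convexHull ℝ (pureSet d k) ⊆ SchmidtSet d d k := by
  refine convexHull_min ?_ (SchmidtSet_convex d k)
  rintro _ ⟨ξ, ⟨h1, _⟩, rfl⟩
  exact ⟨1, fun _ => ξ, fun _ => h1, by simp⟩

theorem kron_unitary {d : ℕ} {O : Matrix (Fin d) (Fin d) ℂ} (hO : IsOrth O) :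
    (Matrix.kroneckerMap (· * ·) O O)ᴴ * (Matrix.kroneckerMap (· * ·) O O) = 1 := by
  have h1 : Oᴴ = Oᵀ := by
    ext i j
    rw [Matrix.conjTranspose_apply, Matrix.transpose_apply, hO.1]
  have h2 : Oᵀ * O = 1 := mul_eq_one_comm.mp hO.2
  rw [Matrix.conjTranspose_kronecker, h1, ← Matrix.mul_kronecker_mul, h2,
    Matrix.one_kronecker_one]

theorem ip_conjO {d : ℕ} {O : Matrix (Fin d) (Fin d) ℂ} (hO : IsOrth O)
    (X Y : Matrix (Fin d × Fin d) (Fin d × Fin d) ℂ) : ip (conjO O X) (conjO O Y) = ip X Y := by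
  have hK := kron_unitary hO
  rw [ip, ip, conjO, conjO]
  set K := Matrix.kroneckerMap (· * ·) O O
  have : (K * X * Kᴴ)ᴴ * (K * Y * Kᴴ) = K * (Xᴴ * Y) * Kᴴ := by
    rw [Matrix.conjTranspose_mul, Matrix.conjTranspose_mul, Matrix.conjTranspose_conjTranspose]
    calc K * (Xᴴ * Kᴴ) * (K * Y * Kᴴ) = K * (Xᴴ * (Kᴴ * K) * Y) * Kᴴ := by
          simp only [Matrix.mul_assoc]
      _ = _ := by rw [hK, mul_one]
  rw [this, Matrix.trace_mul_comm, ← Matrix.mul_assoc, hK, one_mul]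

theorem conjO_sub {d : ℕ} (O : Matrix (Fin d) (Fin d) ℂ)
    (X Y : Matrix (Fin d × Fin d) (Fin d × Fin d) ℂ) :
    conjO O (X - Y) = conjO O X - conjO O Y := by
  rw [conjO, conjO, conjO, mul_sub, sub_mul]

theorem sum_norm_sq_eq {n : Type*} [Fintype n] (ξ : n → ℂ) :
    ((∑ x, ‖ξ x‖ ^ 2 : ℝ) : ℂ) = star ξ ⬝ᵥ ξ := by
  simp only [dotProduct, Pi.star_apply]
  push_cast
  refine Finset.sum_congr rfl fun x _ => ?_
  rw [← Complex.conj_mul']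
  rfl

theorem conjO_hull {d k : ℕ} {O : Matrix (Fin d) (Fin d) ℂ} (hO : IsOrth O)
    (X : Matrix (Fin d × Fin d) (Fin d × Fin d) ℂ) (hX : X ∈ convexHull ℝ (pureSet d k)) :
    conjO O X ∈ convexHull ℝ (pureSet d k) := by
  have hlin : IsLinearMap ℝ (conjO O) := by
    constructor
    · intro x y
      rw [conjO, conjO, conjO, mul_add, add_mul]
    · intro c x
      rw [conjO, conjO, Matrix.mul_smul, Matrix.smul_mul]
  have hconv : Convex ℝ (conjO O ⁻¹' (convexHull ℝ (pureSet d k))) :=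
    (convex_convexHull ℝ _).is_linear_preimage hlin
  refine convexHull_min ?_ hconv hX
  rintro _ ⟨ξ, ⟨h1, h2⟩, rfl⟩
  apply subset_convexHull
  refine ⟨Matrix.kroneckerMap (· * ·) O O *ᵥ ξ, ⟨?_, ?_⟩, ?_⟩
  · have : (Matrix.of fun a b => (Matrix.kroneckerMap (· * ·) O O *ᵥ ξ) (a, b)) =
        O * (Matrix.of fun a b => ξ (a, b)) * Oᵀ := by
      ext a b
      simp only [Matrix.of_apply, Matrix.mulVec, dotProduct, Matrix.kroneckerMap_apply,
        Fintype.sum_prod_type, Matrix.mul_apply, Matrix.transpose_apply, Finset.sum_mul]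
      rw [Finset.sum_comm]
      refine Finset.sum_congr rfl fun x _ => Finset.sum_congr rfl fun y _ => ?_
      ring
    rw [this]
    exact (Matrix.rank_mul_le_left _ _).trans ((Matrix.rank_mul_le_right _ _).trans h1)
  · have h3 := sum_norm_sq_eq (Matrix.kroneckerMap (· * ·) O O *ᵥ ξ)
    rw [Matrix.star_mulVec, ← Matrix.dotProduct_mulVec, Matrix.mulVec_mulVec, kron_unitary hO,
      Matrix.one_mulVec, ← sum_norm_sq_eq, h2] at h3
    exact_mod_cast h3
  · simp only [conjO]
    rw [Matrix.mul_vecMulVec, Matrix.vecMulVec_mul, Matrix.star_mulVec]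

/-! ### The main theorem -/

theorem trace_mul_pure {n : Type*} [Fintype n] (W : Matrix n n ℂ) (ξ : n → ℂ) :
    (W * Matrix.vecMulVec ξ (star ξ)).trace = star ξ ⬝ᵥ (W *ᵥ ξ) := by
  rw [Matrix.mul_vecMulVec, Matrix.trace_vecMulVec, dotProduct_comm]

theorem pure_isHermitian {n : Type*} (ξ : n → ℂ) :
    (Matrix.vecMulVec ξ (star ξ)).IsHermitian := by
  ext x y
  simp [Matrix.vecMulVec_apply, mul_comm]

theorem im_zero_of_star {z : ℂ} (h : star z = z) : z.im = 0 :=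
  Complex.conj_eq_iff_im.mp h

theorem ip_ten {d : ℕ} (α β γ : ℂ) (X : Matrix (Fin d × Fin d) (Fin d × Fin d) ℂ)
    (hX : X.IsHermitian) :
    ip (ten d α β γ) X = α.re * (ctO X).re + β.re * (ctT X).re + γ.re * (ctF X).re := by
  have h1 : (ctO X).im = 0 := by
    apply im_zero_of_star
    simp only [ctO, star_sum, hX.apply]
    exact Finset.sum_comm
  have h2 : (ctT X).im = 0 := by
    apply im_zero_of_star
    simp only [ctT, star_sum, hX.apply]
  have h3 : (ctF X).im = 0 := by
    apply im_zero_of_star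
    simp only [ctF, star_sum, hX.apply]
    exact Finset.sum_comm
  rw [ip, ten_conjTranspose, trace_ten_mul]
  simp [h1, h2, h3]

theorem ctT_pure {d : ℕ} (ξ : Fin d × Fin d → ℂ) :
    ctT (Matrix.vecMulVec ξ (star ξ)) = ((∑ x, ‖ξ x‖ ^ 2 : ℝ) : ℂ) := by
  rw [sum_norm_sq_eq]
  simp only [ctT, dotProduct, Fintype.sum_prod_type, Matrix.vecMulVec_apply, Pi.star_apply]
  refine Finset.sum_congr rfl fun x _ => Finset.sum_congr rfl fun y _ => mul_comm _ _

theorem rank_single {d : ℕ} (x y : Fin d) :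
    (Matrix.of fun a b => (Pi.single (x, y) 1 : Fin d × Fin d → ℂ) (a, b)).rank ≤ 1 := by
  have : (Matrix.of fun a b => (Pi.single (x, y) 1 : Fin d × Fin d → ℂ) (a, b)) =
      Matrix.vecMulVec (Pi.single x 1) (Pi.single y 1) := by
    ext a b
    by_cases h1 : a = x <;> by_cases h2 : b = y <;>
      simp [Matrix.vecMulVec_apply, Pi.single_apply, h1, h2]
  rw [this]
  exact Matrix.rank_vecMulVec_le _ _

theorem norm_single {d : ℕ} (x y : Fin d) :
    ∑ z, ‖(Pi.single (x, y) 1 : Fin d × Fin d → ℂ) z‖ ^ 2 = 1 := by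
  rw [Finset.sum_eq_single (x, y)]
  · simp
  · intro z _ hz
    simp [Pi.single_eq_of_ne hz]
  · simp

theorem ctO_single {d : ℕ} (x y : Fin d) :
    ctO (Matrix.vecMulVec (Pi.single (x, y) 1) (star (Pi.single (x, y) 1) : Fin d × Fin d → ℂ)) =
      if x = y then 1 else 0 := by
  have h : ∀ i : Fin d, (Pi.single (x, y) 1 : Fin d × Fin d → ℂ) (i, i) =
      if i = x then (if x = y then 1 else 0) else 0 := by
    intro i
    simp only [Pi.single_apply, Prod.mk.injEq]
    by_cases h1 : i = x
    · subst h1; simp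
    · simp [h1]
  simp only [ctO, Matrix.vecMulVec_apply, Pi.star_apply, h, apply_ite star, star_one, star_zero]
  by_cases hxy : x = y
  · simp [hxy]
  · simp [hxy]

theorem ctF_single {d : ℕ} (x y : Fin d) :
    ctF (Matrix.vecMulVec (Pi.single (x, y) 1) (star (Pi.single (x, y) 1) : Fin d × Fin d → ℂ)) =
      if x = y then 1 else 0 := by
  simp only [ctF, Matrix.vecMulVec_apply, Pi.star_apply]
  rw [Finset.sum_eq_single x, Finset.sum_eq_single y]
  · by_cases h : x = y
    · subst h; simp
    · simp [Pi.single_apply, h]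
  · intro j _ hj
    simp [Pi.single_apply, hj]
  · simp
  · intro i _ hi
    simp [Pi.single_apply, hi]
  · simp

theorem smul_rank {d : ℕ} (c : ℂ) (ξ : Fin d × Fin d → ℂ) :
    (Matrix.of fun a b => (c • ξ) (a, b)).rank ≤ (Matrix.of fun a b => ξ (a, b)).rank := by
  have : (Matrix.of fun a b => (c • ξ) (a, b)) =
      (c • (1 : Matrix (Fin d) (Fin d) ℂ)) * (Matrix.of fun a b => ξ (a, b)) := by
    rw [Matrix.smul_mul, one_mul]; rfl
  rw [this]
  exact Matrix.rank_mul_le_right _ _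

/-- A quadratic form that is nonnegative on unit vectors of rank at most `k` is nonnegative on all
vectors of rank at most `k`. -/
theorem qf_of_unit {d k : ℕ} (W : Matrix (Fin d × Fin d) (Fin d × Fin d) ℂ)
    (h : ∀ ξ : Fin d × Fin d → ℂ, (Matrix.of fun a b => ξ (a, b)).rank ≤ k →
      ∑ x, ‖ξ x‖ ^ 2 = 1 → 0 ≤ (star ξ ⬝ᵥ (W *ᵥ ξ)).re)
    (ξ : Fin d × Fin d → ℂ) (hξ : (Matrix.of fun a b => ξ (a, b)).rank ≤ k) :
    0 ≤ (star ξ ⬝ᵥ (W *ᵥ ξ)).re := by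
  set N : ℝ := ∑ x, ‖ξ x‖ ^ 2 with hN
  have hN0 : 0 ≤ N := Finset.sum_nonneg fun _ _ => by positivity
  rcases hN0.eq_or_lt with h0 | hpos
  · have : ξ = 0 := by
      funext x
      have := (Finset.sum_eq_zero_iff_of_nonneg (fun x _ => by positivity)).mp h0.symm x
        (Finset.mem_univ x)
      simpa using this
    simp [this]
  · have hs : 0 < Real.sqrt N := Real.sqrt_pos.mpr hpos
    set r : ℝ := (Real.sqrt N)⁻¹ with hr
    have hr0 : 0 < r := inv_pos.mpr hs
    have hrr : r ^ 2 * N = 1 := by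
      rw [hr, inv_pow, Real.sq_sqrt hN0]
      field_simp
    have h1 := h ((r : ℂ) • ξ) ((smul_rank _ _).trans hξ) (by
      rw [← hrr, hN, Finset.mul_sum]
      refine Finset.sum_congr rfl fun x _ => ?_
      rw [Pi.smul_apply, norm_smul, mul_pow, Complex.norm_real, Real.norm_of_nonneg hr0.le])
    have h2 : star ((r : ℂ) • ξ) ⬝ᵥ (W *ᵥ ((r : ℂ) • ξ)) =
        ((r ^ 2 : ℝ) : ℂ) * (star ξ ⬝ᵥ (W *ᵥ ξ)) := by
      have h3 : star (r : ℂ) = (r : ℂ) := Complex.conj_ofReal _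
      rw [star_smul, h3, Matrix.mulVec_smul, smul_dotProduct, dotProduct_smul]
      simp only [smul_eq_mul]
      push_cast
      ring
    rw [h2, Complex.re_ofReal_mul] at h1
    exact nonneg_of_mul_nonneg_right h1 (by positivity)

theorem ip_continuous {n : Type*} [Fintype n] (R : Matrix n n ℂ) :
    Continuous fun X : Matrix n n ℂ => ip (X - R) (X - R) := by
  unfold ip
  fun_prop

/-- The projection of `rho` onto the state set differs from `rho` by an invariant tensor. -/
theorem exists_projection {d k : ℕ} (hd : 2 ≤ d) (hk : 1 ≤ k) (a b : ℝ) :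
    ∃ P ∈ convexHull ℝ (pureSet d k), (∃ α β γ, P - rho d a b = ten d α β γ) ∧
      ∀ X ∈ convexHull ℝ (pureSet d k), 0 ≤ ip (P - rho d a b) (X - P) := by
  have hconv := convex_convexHull ℝ (pureSet d k)
  have hne : (convexHull ℝ (pureSet d k)).Nonempty := by
    let x : Fin d := ⟨0, by omega⟩
    exact ⟨_, subset_convexHull ℝ _ ⟨Pi.single (x, x) 1,
      ⟨(rank_single x x).trans hk, norm_single x x⟩, rfl⟩⟩
  obtain ⟨P, hP, hmin⟩ := (aux_isCompact_convexHull (pureSet_compact d k)).exists_isMinOn hne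
    (ip_continuous (rho d a b)).continuousOn
  have hmin' : ∀ X ∈ convexHull ℝ (pureSet d k),
      ip (P - rho d a b) (P - rho d a b) ≤ ip (X - rho d a b) (X - rho d a b) :=
    fun X hX => hmin hX
  have hvar := ip_variational hconv (rho d a b) P hP hmin'
  refine ⟨P, hP, ?_, hvar⟩
  apply eq_ten_of_invariant hd
  intro O hO
  have hrho : conjO O (rho d a b) = rho d a b := by
    rw [rho_eq_ten d hd, conjO_ten hO]
  have hP' := conjO_hull hO P hP
  set P' := conjO O P with hPd
  have hf : ip (P' - rho d a b) (P' - rho d a b) = ip (P - rho d a b) (P - rho d a b) := by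
    rw [← ip_conjO hO (P - rho d a b), conjO_sub, hrho]
  have hvar' := ip_variational hconv (rho d a b) P' hP' (by rw [hf]; exact hmin') P hP
  have hv := hvar P' hP'
  rw [conjO_sub, hrho, ← hPd]
  have h0 : ip (P' - P) (P' - P) = 0 := by
    apply le_antisymm _ (ip_self_nonneg _)
    have e : ip (P' - P) (P' - P) =
        - ip (P - rho d a b) (P' - P) - ip (P' - rho d a b) (P - P') := by
      simp only [ip_sub_left, ip_sub_right]
      ring
    rw [e]
    linarith
  rw [sub_eq_zero.mp (ip_self_eq_zero _ h0)]

theorem schmidt_pairing_forward {d k : ℕ} (hd : 2 ≤ d) (a b : ℝ)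
    (h : rho d a b ∈ SchmidtSet d d k) (p q : ℝ) (hpq : IsKPositive k (Lmap d p q)) :
    0 ≤ ((rho d p q * rho d a b).trace).re := by
  obtain ⟨N, ξ, hξ, he⟩ := h
  rw [isKPositive_iff hd] at hpq
  rw [he, Finset.mul_sum, Matrix.trace_sum, Complex.re_sum]
  refine Finset.sum_nonneg fun i _ => ?_
  rw [trace_mul_pure]
  exact hpq _ (hξ i)

theorem schmidt_pairing_reverse {d k : ℕ} (hd : 2 ≤ d) (hk : 1 ≤ k) (a b : ℝ)
    (h : ∀ p q : ℝ, IsKPositive k (Lmap d p q) → 0 ≤ ((rho d p q * rho d a b).trace).re) :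
    rho d a b ∈ SchmidtSet d d k := by
  by_contra hcon
  obtain ⟨P, hP, ⟨α, β, γ, hW⟩, hvar⟩ := exists_projection (k := k) hd hk a b
  have hne : P - rho d a b ≠ 0 := by
    intro h0
    rw [sub_eq_zero] at h0
    exact hcon (h0 ▸ hull_subset_Schmidt d k hP)
  have hn0 : 0 < ip (P - rho d a b) (P - rho d a b) :=
    lt_of_le_of_ne (ip_self_nonneg _) fun h0 => hne (ip_self_eq_zero _ h0.symm)
  have hnsplit : ip (P - rho d a b) (P - rho d a b) =
      ip (P - rho d a b) P - ip (P - rho d a b) (rho d a b) := ip_sub_right _ _ _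
  set n0 := ip (P - rho d a b) (P - rho d a b) with hn0d
  set c := ip (P - rho d a b) P with hc
  obtain ⟨A, hA⟩ : ∃ A, A = α.re := ⟨_, rfl⟩
  obtain ⟨B, hB⟩ : ∃ B, B = β.re + n0 / 2 - c := ⟨_, rfl⟩
  obtain ⟨G, hG⟩ : ∃ G, G = γ.re := ⟨_, rfl⟩
  have hg : ∀ X : Matrix (Fin d × Fin d) (Fin d × Fin d) ℂ, X.IsHermitian →
      A * (ctO X).re + B * (ctT X).re + G * (ctF X).re =
        ip (P - rho d a b) X + (n0 / 2 - c) * (ctT X).re := by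
    intro X hX
    rw [hW, ip_ten _ _ _ _ hX, hA, hB, hG]
    ring
  have hpure : ∀ ξ : Fin d × Fin d → ℂ, (Matrix.of fun a b => ξ (a, b)).rank ≤ k →
      ∑ x, ‖ξ x‖ ^ 2 = 1 → n0 / 2 ≤ A * (ctO (Matrix.vecMulVec ξ (star ξ))).re +
        B * (ctT (Matrix.vecMulVec ξ (star ξ))).re +
        G * (ctF (Matrix.vecMulVec ξ (star ξ))).re := by
    intro ξ h1 h2
    have h3 := hvar _ (subset_convexHull ℝ _ ⟨ξ, ⟨h1, h2⟩, rfl⟩)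
    rw [hg _ (pure_isHermitian ξ), ctT_pure, h2, Complex.ofReal_re]
    rw [ip_sub_right, ← hc] at h3
    simp only at h3
    linarith
  have hd2 : (2 : ℝ) ≤ d := by exact_mod_cast hd
  let x : Fin d := ⟨0, by omega⟩
  let y : Fin d := ⟨1, by omega⟩
  have hxy : x ≠ y := by simp [x, y]
  have hxx1 := hpure _ ((rank_single x x).trans hk) (norm_single x x)
  have hxy1 := hpure _ ((rank_single x y).trans hk) (norm_single x y)
  rw [ctO_single, ctF_single, ctT_pure, norm_single, if_pos rfl] at hxx1
  rw [ctO_single, ctF_single, ctT_pure, norm_single, if_neg hxy] at hxy1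
  simp only [Complex.one_re, Complex.zero_re, Complex.ofReal_re] at hxx1 hxy1
  obtain ⟨τ, hτ⟩ : ∃ τ : ℝ, τ = A * d + B * d ^ 2 + G * d := ⟨_, rfl⟩
  have hτ0 : 0 < τ := by
    have e : τ = d * (A + B + G) + d * (d - 1) * B := by rw [hτ]; ring
    rw [e]
    have h1 : 0 < A + B + G := by linarith
    have h2 : 0 < B := by linarith
    have h3 : (0 : ℝ) < d := by linarith
    have h4 : (0 : ℝ) < d - 1 := by linarith
    positivity
  have hd0 : (d : ℝ) ≠ 0 := by linarith
  have hrt : ∀ X : Matrix (Fin d × Fin d) (Fin d × Fin d) ℂ,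
      ((rho d (d * A / τ) (d * G / τ) * X).trace).re =
        (A * (ctO X).re + B * (ctT X).re + G * (ctF X).re) / τ := by
    intro X
    have e1 : d * A / τ / d = A / τ := by field_simp
    have e2 : d * G / τ / d = G / τ := by field_simp
    have e3 : (1 - d * A / τ - d * G / τ) / (d : ℝ) ^ 2 = B / τ := by
      field_simp
      rw [hτ]
      ring
    rw [rho_eq_ten d hd, e1, e2, e3, trace_ten_mul, Complex.add_re, Complex.add_re,
      Complex.re_ofReal_mul, Complex.re_ofReal_mul, Complex.re_ofReal_mul]
    ring
  have hkpos : IsKPositive k (Lmap d (d * A / τ) (d * G / τ)) := by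
    rw [isKPositive_iff hd]
    apply qf_of_unit
    intro ξ h1 h2
    rw [← trace_mul_pure, hrt]
    have := hpure ξ h1 h2
    exact div_nonneg (by linarith) hτ0.le
  have hfin := h _ _ hkpos
  rw [hrt, hg _ (rho_isHermitian d hd a b)] at hfin
  have hT : (ctT (rho d a b)).re = 1 := by
    have : ctT (rho d a b) = ((1 : ℝ) : ℂ) := by
      have hdc : (d : ℂ) ≠ 0 := by exact_mod_cast hd0
      rw [rho_eq_ten d hd, ctT_ten]
      push_cast
      field_simp
      ring
    rw [this, Complex.ofReal_re]
  rw [hT] at hfin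
  have := mul_nonneg hfin hτ0.le
  rw [div_mul_cancel₀ _ hτ0.ne'] at this
  linarith


/-- For `d ≥ 2` and `1 ≤ k ≤ d`: `ρ^{(d)}_{a,b} ∈ Sch_k` iff for all
real `p, q` such that `L^{(d)}_{p,q}` is `k`-positive,
`(d+1)(pa + qb) + (pb + qa) ≥ -1/(d-1)`. -/
theorem rho_schmidt_iff_pairing {d k : ℕ} (hd : 2 ≤ d) (hk : 1 ≤ k) (hkd : k ≤ d)
    (a b : ℝ) :
    rho d a b ∈ SchmidtSet d d k ↔
      ∀ p q : ℝ, IsKPositive k (Lmap d p q) →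
        -(1 / ((d : ℝ) - 1)) ≤ ((d : ℝ) + 1) * (p * a + q * b) + (p * b + q * a) := by
  constructor
  · intro h p q hpq
    exact (pairing_iff d hd a b p q).mpr (schmidt_pairing_forward hd a b h p q hpq)
  · intro h
    exact schmidt_pairing_reverse hd hk a b fun p q hpq =>
      (pairing_iff d hd a b p q).mp (h p q hpq)

end
end
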